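/- arXiv:1504.07778 — 2 statements merged into one kernel-verified Lean document; each statement's English description precedes it below -/
import Mathlib

section
/- Let (X,d,μ) be a metric measure space with X locally compact and separable and μ Borel regular with 0 < μ(B) < ∞ for all balls B. Let 𝓜 be the set of Borel measures ν with compact support satisfying 0 ≤ ν ≤ μ, with metric d_𝓜 defined via mass-transport decompositions using a gauge function h (strictly increasing, continuous, h(0)=0, lim_{ε→0⁺} h(ε)/ε = 0, superadditive, h(ε)→∞). Then d_𝓜 is a metric on 𝓜. -/
open MeasureTheory Set Filter
open scoped ENNReal Classical

variable {X : Type*} [MetricSpace X] [MeasurableSpace X]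

/-- Total mass of a measure, as a real number. -/
noncomputable def mass (ν : Measure X) : ℝ := (ν Set.univ).toReal

/-- The support of a measure. -/
def msupp (ν : Measure X) : Set X := {x : X | ∀ ε : ℝ, 0 < ε → 0 < ν (Metric.ball x ε)}

/-- The set `𝓜` of measures dominated by `μ` with compact support. -/
def MM (μ : Measure X) : Set (Measure X) := {ν | ν ≤ μ ∧ IsCompact (msupp ν)}

/-- Gauge function `h` used in the definition of the mass transport metric. -/
def IsGauge (h : ℝ → ℝ) : Prop :=
  StrictMonoOn h (Set.Ici 0) ∧ ContinuousOn h (Set.Ici 0) ∧ h 0 = 0 ∧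
  Tendsto (fun ε => h ε / ε) (nhdsWithin 0 (Set.Ioi 0)) (nhds 0) ∧
  (∀ a b : ℝ, 0 ≤ a → 0 ≤ b → h a + h b ≤ h (a + b)) ∧
  Tendsto h atTop atTop

/-- `Γ_{ε,δ}(ν,η) ≠ ∅`: existence of a countable mass-transport decomposition. -/
def GammaDecomp (μ : Measure X) (ε δ : ℝ) (ν η : Measure X) : Prop :=
  ∃ νi ηi : ℕ → Measure X,
    (∀ i, νi i ∈ MM μ) ∧ (∀ i, ηi i ∈ MM μ) ∧
    ν = Measure.sum νi ∧ η = Measure.sum ηi ∧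
    (∃ S : ℝ, HasSum (fun i => |mass (νi i) - mass (ηi i)|) S ∧ S ≤ δ) ∧
    (∀ i, Metric.diam (msupp (νi i) ∪ msupp (ηi i)) ≤ ε)

/-- The mass transport metric `d_𝓜`. -/
noncomputable def dM (h : ℝ → ℝ) (μ : Measure X) (ν η : Measure X) : ℝ :=
  sInf {ε : ℝ | 0 < ε ∧ GammaDecomp μ ε (h ε) ν η}

/-- A rectifiable curve in `𝓜` subparametrized by arc-length: a `1`-Lipschitz map
`[0,b] → (𝓜, d_𝓜)`. -/
def IsCurveM (h : ℝ → ℝ) (μ : Measure X) (b : ℝ) (γ : ℝ → Measure X) : Prop :=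
  0 ≤ b ∧ (∀ t ∈ Icc (0:ℝ) b, γ t ∈ MM μ) ∧
  ∀ s ∈ Icc (0:ℝ) b, ∀ t ∈ Icc (0:ℝ) b, dM h μ (γ s) (γ t) ≤ |s - t|

/-- A rectifiable curve in `𝓧 = 𝓜 \ {0}` subparametrized by arc-length. -/
def IsCurveX (h : ℝ → ℝ) (μ : Measure X) (b : ℝ) (γ : ℝ → Measure X) : Prop :=
  IsCurveM h μ b γ ∧ ∀ t ∈ Icc (0:ℝ) b, γ t ≠ 0

/-- The mean value functional `F_f(η) = (1/‖η‖) ∫ f dη`. -/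
noncomputable def FfM (f : X → ℝ) (η : Measure X) : ℝ := (∫ x, f x ∂η) / mass η

/-- `r_F^ε(η)`. -/
noncomputable def rGradE (h : ℝ → ℝ) (μ : Measure X) (F : Measure X → ℝ) (ε : ℝ)
    (η : Measure X) : ℝ≥0∞ :=
  sSup {r : ℝ≥0∞ | ∃ (b : ℝ) (γ : ℝ → Measure X) (s : ℝ),
    IsCurveX h μ b γ ∧ γ 0 = η ∧ 0 < s ∧ s < ε ∧ s < b ∧
    r = ENNReal.ofReal (|F (γ s) - F η| / s)}

/-- The upper gradient `r_F(η) = lim_{ε→0} r_F^ε(η)`. -/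
noncomputable def rGrad (h : ℝ → ℝ) (μ : Measure X) (F : Measure X → ℝ)
    (η : Measure X) : ℝ≥0∞ :=
  ⨅ (ε : ℝ) (_ : 0 < ε), rGradE h μ F ε η

/-- Upper semicontinuous regularization along curves of `g : 𝓧 → [0,∞]`. -/
noncomputable def breveG (h : ℝ → ℝ) (μ : Measure X) (g : Measure X → ℝ≥0∞)
    (η : Measure X) : ℝ≥0∞ :=
  ⨅ (s : ℝ) (_ : 0 < s), sSup {r : ℝ≥0∞ | ∃ (b : ℝ) (γ : ℝ → Measure X) (t : ℝ),
    IsCurveX h μ b γ ∧ γ 0 = η ∧ 0 ≤ t ∧ t < s ∧ t ≤ b ∧ r = g (γ t)}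

/-- `sup { Σᵢ G(ηᵢ)^p ‖ηᵢ‖ }` over finite disjointly supported families in `𝓧`. -/
noncomputable def LpPow (μ : Measure X) (p : ℝ) (G : Measure X → ℝ≥0∞) : ℝ≥0∞ :=
  sSup {r : ℝ≥0∞ | ∃ (k : ℕ) (η : Fin k → Measure X),
    (∀ i, η i ∈ MM μ ∧ η i ≠ 0) ∧
    (∀ i j, i ≠ j → Disjoint (msupp (η i)) (msupp (η j))) ∧
    r = ∑ i, (G (η i)) ^ p * (η i) Set.univ}

/-- The `𝓛^p(𝓧)` norm of `F : 𝓧 → ℝ`. -/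
noncomputable def LpNorm (μ : Measure X) (p : ℝ) (F : Measure X → ℝ) : ℝ≥0∞ :=
  (LpPow μ p (fun η => ENNReal.ofReal |F η|)) ^ (1 / p)

/-- The `𝓛^p(𝓧)` norm for an extended exponent `p ∈ [1,∞]`. -/
noncomputable def LpNormE (μ : Measure X) (p : ℝ≥0∞) (F : Measure X → ℝ) : ℝ≥0∞ :=
  if p = ∞ then ⨆ (η : Measure X) (_ : η ∈ MM μ ∧ η ≠ 0), ENNReal.ofReal |F η|
  else LpNorm μ p.toReal F


namespace MT

lemma msupp_eq (ν : Measure X) : msupp ν = ν.support := by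
  ext x
  rw [(Metric.nhds_basis_ball (x := x)).mem_measureSupport]
  rfl

lemma msupp_closed (ν : Measure X) : IsClosed (msupp ν) := by
  rw [msupp_eq]; exact Measure.isClosed_support

lemma msupp_mono {ν η : Measure X} (h : ν ≤ η) : msupp ν ⊆ msupp η := by
  rw [msupp_eq, msupp_eq]; exact Measure.support_mono h

lemma msupp_compl [TopologicalSpace.SeparableSpace X] (ν : Measure X) : ν (msupp ν)ᶜ = 0 := by
  haveI := UniformSpace.secondCountable_of_separable X
  rw [msupp_eq]; exact Measure.measure_compl_support

@[simp] lemma msupp_zero : msupp (0 : Measure X) = ∅ := by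
  rw [msupp_eq]; exact Measure.support_zero

lemma MM_of_le {μ ν η : Measure X} (h : η ∈ MM μ) (hle : ν ≤ η) : ν ∈ MM μ :=
  ⟨hle.trans h.1, h.2.of_isClosed_subset (msupp_closed ν) (msupp_mono hle)⟩

lemma zero_mem_MM (μ : Measure X) : (0 : Measure X) ∈ MM μ := by
  refine ⟨Measure.zero_le _, by simp⟩

lemma mass_zero : mass (0 : Measure X) = 0 := by simp [mass]

lemma smul_le {c : ℝ≥0∞} (hc : c ≤ 1) (ν : Measure X) : c • ν ≤ ν := by
  intro s
  simpa using mul_le_mul_left hc (ν s)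

lemma mass_smul (c : ℝ≥0∞) (ν : Measure X) : mass (c • ν) = c.toReal * mass ν := by
  simp [mass]

lemma MM_finite [TopologicalSpace.SeparableSpace X] {μ ν : Measure X}
    [IsFiniteMeasureOnCompacts μ] (h : ν ∈ MM μ) : IsFiniteMeasure ν := by
  refine ⟨?_⟩
  calc ν univ ≤ ν (msupp ν) + ν (msupp ν)ᶜ := by
        rw [← union_compl_self (msupp ν)]; exact measure_union_le _ _
    _ = ν (msupp ν) := by rw [msupp_compl, add_zero]
    _ ≤ μ (msupp ν) := h.1 _
    _ < ⊤ := h.2.measure_lt_top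

/-- cost of a pair -/
noncomputable def cost (ν η : Measure X) : ℝ≥0∞ := ENNReal.ofReal |mass ν - mass η|

lemma gamma_mk {ι : Type*} [Denumerable ι] {μ ν η : Measure X} {ε δ : ℝ} (hδ : 0 ≤ δ)
    (f g : ι → Measure X) (hf : ∀ i, f i ∈ MM μ) (hg : ∀ i, g i ∈ MM μ)
    (hν : ν = Measure.sum f) (hη : η = Measure.sum g)
    (hs : ∑' i, cost (f i) (g i) ≤ ENNReal.ofReal δ)
    (hd : ∀ i, Metric.diam (msupp (f i) ∪ msupp (g i)) ≤ ε) : GammaDecomp μ ε δ ν η := by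
  let e : ℕ ≃ ι := (Denumerable.eqv ι).symm
  have key : ∀ k : ι → Measure X, Measure.sum k = Measure.sum (fun n => k (e n)) := by
    intro k
    ext s hs
    rw [Measure.sum_apply _ hs, Measure.sum_apply _ hs]
    exact (e.tsum_eq (fun i => k i s)).symm
  refine ⟨fun n => f (e n), fun n => g (e n), fun n => hf _, fun n => hg _,
    hν.trans (key f), hη.trans (key g), ?_, fun n => hd _⟩
  have hs' : ∑' n, ENNReal.ofReal |mass (f (e n)) - mass (g (e n))| ≤ ENNReal.ofReal δ := by
    refine le_trans (le_of_eq ?_) hs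
    exact e.tsum_eq (fun i => cost (f i) (g i))
  have hne : ∑' n, ENNReal.ofReal |mass (f (e n)) - mass (g (e n))| ≠ ⊤ :=
    ne_top_of_le_ne_top ENNReal.ofReal_ne_top hs'
  have hsum : Summable (fun n => |mass (f (e n)) - mass (g (e n))|) := by
    have := ENNReal.summable_toReal hne
    simpa [ENNReal.toReal_ofReal] using this
  refine ⟨_, hsum.hasSum, ?_⟩
  rw [← ENNReal.ofReal_tsum_of_nonneg (fun _ => abs_nonneg _) hsum] at hs'
  exact (ENNReal.ofReal_le_ofReal_iff hδ).1 hs'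

lemma gamma_cost {δ : ℝ} {f g : ℕ → Measure X}
    (h : ∃ S : ℝ, HasSum (fun i => |mass (f i) - mass (g i)|) S ∧ S ≤ δ) :
    ∑' i, cost (f i) (g i) ≤ ENNReal.ofReal δ := by
  obtain ⟨S, hS, hle⟩ := h
  unfold cost
  rw [← ENNReal.ofReal_tsum_of_nonneg (fun _ => abs_nonneg _) hS.summable, hS.tsum_eq]
  exact ENNReal.ofReal_le_ofReal hle

lemma gamma_symm {μ ν η : Measure X} {ε δ : ℝ} (h : GammaDecomp μ ε δ ν η) :
    GammaDecomp μ ε δ η ν := by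
  obtain ⟨f, g, hf, hg, hν, hη, hs, hd⟩ := h
  refine ⟨g, f, hg, hf, hη, hν, ?_, ?_⟩
  · simpa only [abs_sub_comm] using hs
  · simpa only [union_comm] using hd

lemma gauge_pos {h : ℝ → ℝ} (hh : IsGauge h) {ε : ℝ} (hε : 0 < ε) : 0 < h ε := by
  rw [← hh.2.2.1]
  exact hh.1 (by simp) (by simpa using hε.le) hε

lemma set_nonempty {h : ℝ → ℝ} (hh : IsGauge h) {μ ν η : Measure X}
    (hν : ν ∈ MM μ) (hη : η ∈ MM μ) : {ε : ℝ | 0 < ε ∧ GammaDecomp μ ε (h ε) ν η}.Nonempty := by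
  obtain ⟨ε, h1, h2, h3⟩ := ((eventually_ge_atTop (Metric.diam (msupp ν ∪ msupp η))).and
    ((eventually_gt_atTop (0:ℝ)).and
      (hh.2.2.2.2.2.eventually_ge_atTop |mass ν - mass η|))).exists
  refine ⟨ε, h2, ?_⟩
  refine gamma_mk (ι := ℕ) (gauge_pos hh h2).le (fun n => if n = 0 then ν else 0)
    (fun n => if n = 0 then η else 0) ?_ ?_ ?_ ?_ ?_ ?_
  · intro i; split_ifs; exacts [hν, zero_mem_MM μ]
  · intro i; split_ifs; exacts [hη, zero_mem_MM μ]
  · ext s hs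
    rw [Measure.sum_apply _ hs, tsum_eq_single 0]
    · simp
    · intro b hb; simp [hb]
  · ext s hs
    rw [Measure.sum_apply _ hs, tsum_eq_single 0]
    · simp
    · intro b hb; simp [hb]
  · rw [tsum_eq_single 0]
    · simpa [cost] using ENNReal.ofReal_le_ofReal h3
    · intro b hb; simp [hb, cost]
  · intro i
    by_cases hi : i = 0
    · simpa [hi] using h1
    · simp [hi, h2.le]

lemma gamma_self [BorelSpace X] [TopologicalSpace.SeparableSpace X] {μ ν : Measure X}
    (hν : ν ∈ MM μ) {ε δ : ℝ} (hε : 0 < ε) (hδ : 0 ≤ δ) : GammaDecomp μ ε δ ν ν := by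
  rcases isEmpty_or_nonempty X with hX | hX
  · have : ν = 0 := Measure.eq_zero_of_isEmpty ν
    subst this
    refine gamma_mk (ι := ℕ) hδ (fun _ => 0) (fun _ => 0) (fun _ => hν) (fun _ => hν) ?_ ?_ ?_ ?_
    · simp
    · simp
    · simp [cost]
    · simp [hε.le]
  let x := TopologicalSpace.denseSeq X
  let B : ℕ → Set X := fun n => Metric.closedBall (x n) (ε / 2)
  let A : ℕ → Set X := disjointed B
  have hA : ∀ n, MeasurableSet (A n) := fun n =>
    MeasurableSet.disjointed (fun i => Metric.isClosed_closedBall.measurableSet) n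
  have hU : ⋃ n, A n = univ := by
    rw [iUnion_disjointed, eq_univ_iff_forall]
    intro y
    obtain ⟨n, hn⟩ := (TopologicalSpace.denseRange_denseSeq X).exists_dist_lt y (half_pos hε)
    exact mem_iUnion.2 ⟨n, hn.le⟩
  have hsum : ν = Measure.sum (fun n => ν.restrict (A n)) := by
    rw [← Measure.restrict_iUnion (disjoint_disjointed B) hA, hU, Measure.restrict_univ]
  have hm : ∀ n, ν.restrict (A n) ∈ MM μ := fun n => MM_of_le hν Measure.restrict_le_self
  refine gamma_mk (ι := ℕ) hδ _ _ hm hm hsum hsum (by simp [cost]) ?_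
  intro n
  rw [union_self]
  have : msupp (ν.restrict (A n)) ⊆ Metric.closedBall (x n) (ε / 2) := by
    rw [msupp_eq]
    refine Measure.support_restrict_subset.trans (inter_subset_left.trans ?_)
    exact closure_minimal (disjointed_subset B n) Metric.isClosed_closedBall
  calc _ ≤ 2 * (ε / 2) := Metric.diam_le_of_subset_closedBall (half_pos hε).le this
    _ = ε := by ring

lemma univ_le_cost {ν η : Measure X} [IsFiniteMeasure ν] [IsFiniteMeasure η] :
    ν univ ≤ η univ + cost ν η := by
  unfold cost mass
  rw [← ENNReal.ofReal_toReal (measure_ne_top ν univ), ← ENNReal.ofReal_toReal (measure_ne_top η univ),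
    ENNReal.toReal_ofReal ENNReal.toReal_nonneg, ENNReal.toReal_ofReal ENNReal.toReal_nonneg,
    ← ENNReal.ofReal_add ENNReal.toReal_nonneg (abs_nonneg _)]
  apply ENNReal.ofReal_le_ofReal
  linarith [le_abs_self ((ν univ).toReal - (η univ).toReal)]

lemma prokhorov [BorelSpace X] [TopologicalSpace.SeparableSpace X] {μ ν η : Measure X}
    [IsFiniteMeasureOnCompacts μ] {ε δ : ℝ} (h : GammaDecomp μ ε δ ν η) (F : Set X)
    (hF : IsClosed F) : ν F ≤ η (Metric.cthickening ε F) + ENNReal.ofReal δ := by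
  obtain ⟨f, g, hf, hg, hν, hη, hs, hd⟩ := h
  have hs := gamma_cost hs
  rw [hν, hη, Measure.sum_apply _ hF.measurableSet,
    Measure.sum_apply _ Metric.isClosed_cthickening.measurableSet]
  refine le_trans ?_ (add_le_add_right hs _)
  rw [← ENNReal.tsum_add]
  refine ENNReal.tsum_le_tsum fun i => ?_
  haveI := MM_finite (hf i)
  haveI := MM_finite (hg i)
  by_cases hi : (F ∩ msupp (f i)).Nonempty
  · obtain ⟨x, hx, hx'⟩ := hi
    have hsub : msupp (g i) ⊆ Metric.cthickening ε F := by
      intro y hy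
      refine Metric.mem_cthickening_of_dist_le y x ε F hx ?_
      exact (Metric.dist_le_diam_of_mem ((hf i).2.union (hg i).2).isBounded
        (mem_union_right _ hy) (mem_union_left _ hx')).trans (hd i)
    have : g i univ ≤ g i (Metric.cthickening ε F) := by
      calc g i univ ≤ g i (msupp (g i)) + g i (msupp (g i))ᶜ := by
            rw [← union_compl_self (msupp (g i))]; exact measure_union_le _ _
        _ = g i (msupp (g i)) := by rw [msupp_compl, add_zero]
        _ ≤ _ := measure_mono hsub
    calc f i F ≤ f i univ := measure_mono (subset_univ _)
      _ ≤ g i univ + cost (f i) (g i) := univ_le_cost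
      _ ≤ _ := by gcongr
  · have : f i F = 0 := by
      refine measure_mono_null ?_ (msupp_compl (f i))
      intro y hy hy'
      exact hi ⟨y, hy, hy'⟩
    simp [this]

lemma le_of_dM_zero [BorelSpace X] [TopologicalSpace.SeparableSpace X] {μ ν η : Measure X}
    [IsFiniteMeasureOnCompacts μ] {h : ℝ → ℝ} (hh : IsGauge h) (hν : ν ∈ MM μ) (hη : η ∈ MM μ)
    (h0 : dM h μ ν η = 0) (F : Set X) (hF : IsClosed F) : ν F ≤ η F := by
  haveI := MM_finite hη
  have hex : ∀ n : ℕ, ∃ ε : ℝ, 0 < ε ∧ ε < 1 / ((n : ℝ) + 1) ∧ GammaDecomp μ ε (h ε) ν η := by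
    intro n
    have hlt : dM h μ ν η < 1 / ((n : ℝ) + 1) := by rw [h0]; positivity
    obtain ⟨ε, hε, hε'⟩ := exists_lt_of_csInf_lt (set_nonempty hh hν hη) hlt
    exact ⟨ε, hε.1, hε', hε.2⟩
  choose ε e0 e1 e2 using hex
  have hlim : Tendsto ε atTop (nhds 0) :=
    squeeze_zero (fun n => (e0 n).le) (fun n => (e1 n).le) tendsto_one_div_add_atTop_nhds_zero_nat
  have hlim2 : Tendsto (fun n => h (ε n)) atTop (nhds 0) := by
    have := hh.2.1 0 (by simp)
    unfold ContinuousWithinAt at this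
    rw [hh.2.2.1] at this
    refine this.comp (tendsto_nhdsWithin_iff.2 ⟨hlim, Eventually.of_forall fun n => (e0 n).le⟩)
  have h3 := (tendsto_measure_cthickening_of_isClosed (μ := η)
    ⟨1, one_pos, measure_ne_top _ _⟩ hF).comp hlim
  have h4 := ENNReal.tendsto_ofReal hlim2
  have h5 := h3.add h4
  rw [ENNReal.ofReal_zero, add_zero] at h5
  exact ge_of_tendsto' h5 fun n => prokhorov (e2 n) F hF

lemma dM_symm (h : ℝ → ℝ) (μ ν η : Measure X) : dM h μ ν η = dM h μ η ν := by
  unfold dM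
  congr 1
  ext ε
  exact and_congr_right fun _ => ⟨gamma_symm, gamma_symm⟩

/-- The coupling of two countable decompositions of the same measure. -/
lemma coupling [BorelSpace X] [TopologicalSpace.SeparableSpace X] {η : Measure X}
    [IsFiniteMeasure η] (f g : ℕ → Measure X) (hf : η = Measure.sum f) (hg : η = Measure.sum g) :
    ∃ m : ℕ → ℕ → ℝ≥0∞, (∀ i, ∑' j, m i j = f i univ) ∧ (∀ j, ∑' i, m i j = g j univ) ∧
      ∀ i j, m i j ≠ 0 → (msupp (f i) ∩ msupp (g j)).Nonempty := by
  have hfle : ∀ i, f i ≤ η := fun i => by rw [hf]; exact Measure.le_sum f i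
  have hgle : ∀ i, g i ≤ η := fun i => by rw [hg]; exact Measure.le_sum g i
  haveI hgf : ∀ j, IsFiniteMeasure (g j) := fun j => isFiniteMeasure_of_le η (hgle j)
  have hd : ∀ j, η.withDensity ((g j).rnDeriv η) = g j := fun j =>
    Measure.withDensity_rnDeriv_eq _ _ (Measure.absolutelyContinuous_of_le (hgle j))
  have hmeas : ∀ j, Measurable ((g j).rnDeriv η) := fun j => Measure.measurable_rnDeriv _ _
  have hone : (fun x => ∑' j, (g j).rnDeriv η x) =ᵐ[η] fun _ => 1 := by
    have h1 : η.withDensity (∑' j, (g j).rnDeriv η) = η.withDensity (fun _ => 1) := by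
      rw [withDensity_tsum hmeas]
      simp_rw [hd]
      rw [← hg]
      exact withDensity_one.symm
    have h2 : (∑' j, (g j).rnDeriv η) = fun x => ∑' j, (g j).rnDeriv η x := by
      ext x
      exact tsum_apply (Pi.summable.2 fun _ => ENNReal.summable)
    rw [h2] at h1
    exact (withDensity_eq_iff_of_sigmaFinite (Measurable.ennreal_tsum hmeas).aemeasurable
      aemeasurable_const).1 h1
  refine ⟨fun i j => ∫⁻ x, (g j).rnDeriv η x ∂(f i), ?_, ?_, ?_⟩
  · intro i
    rw [← lintegral_tsum (fun j => (hmeas j).aemeasurable)]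
    rw [lintegral_congr_ae ((Measure.absolutelyContinuous_of_le (hfle i)).ae_le hone)]
    simp
  · intro j
    rw [← lintegral_sum_measure, ← hf, ← setLIntegral_univ, ← withDensity_apply _ MeasurableSet.univ, hd]
  · intro i j hm
    by_contra hne
    apply hm
    have hB : MeasurableSet (msupp (g j)) := (msupp_closed _).measurableSet
    change ∫⁻ x, (g j).rnDeriv η x ∂(f i) = 0
    rw [← lintegral_add_compl _ hB]
    have h1 : f i (msupp (g j)) = 0 := by
      refine measure_mono_null ?_ (msupp_compl (f i))
      intro y hy hy'
      exact hne ⟨y, hy', hy⟩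
    have h2 : ∫⁻ x in (msupp (g j))ᶜ, (g j).rnDeriv η x ∂(f i) ≤ 0 := by
      calc _ ≤ ∫⁻ x in (msupp (g j))ᶜ, (g j).rnDeriv η x ∂η :=
            lintegral_mono' (Measure.restrict_mono subset_rfl (hfle i)) le_rfl
        _ = g j (msupp (g j))ᶜ := by rw [← withDensity_apply _ hB.compl, hd]
        _ = 0 := msupp_compl _
    rw [setLIntegral_measure_zero _ _ h1, le_antisymm h2 (by simp), add_zero]

lemma tsum_sumtype {α β : Type*} (F : α ⊕ β → ℝ≥0∞) :
    ∑' i, F i = ∑' a, F (Sum.inl a) + ∑' b, F (Sum.inr b) :=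
  (HasSum.sum (f := F) ENNReal.summable.hasSum ENNReal.summable.hasSum).tsum_eq

lemma weights {m : ℕ → ℝ≥0∞} {M : ℝ≥0∞} (hM : M ≠ ⊤) (h : ∑' j, m j = M) :
    ∑' j, m j / M + (if M = 0 then 1 else 0) = 1 ∧ (∀ j, m j / M ≤ 1) ∧
    ∀ j, (m j / M).toReal * M.toReal = (m j).toReal := by
  have hle : ∀ j, m j ≤ M := fun j => h ▸ ENNReal.le_tsum j
  refine ⟨?_, fun j => ENNReal.div_le_of_le_mul (by simpa using hle j), fun j => ?_⟩
  · simp_rw [div_eq_mul_inv]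
    rw [ENNReal.tsum_mul_right, h]
    split_ifs with h0
    · simp [h0]
    · rw [ENNReal.mul_inv_cancel h0 hM, add_zero]
  · rw [← ENNReal.toReal_mul]
    by_cases h0 : M = 0
    · have := hle j
      rw [h0] at this
      simp [h0, le_antisymm this (by simp)]
    · rw [ENNReal.div_mul_cancel h0 hM]

lemma gamma_trans [BorelSpace X] [TopologicalSpace.SeparableSpace X] {μ ν η ρ : Measure X}
    [IsFiniteMeasureOnCompacts μ] (hη : η ∈ MM μ) {ε₁ δ₁ ε₂ δ₂ : ℝ}
    (he1 : 0 ≤ ε₁) (he2 : 0 ≤ ε₂) (hd1 : 0 ≤ δ₁) (hd2 : 0 ≤ δ₂)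
    (h1 : GammaDecomp μ ε₁ δ₁ ν η) (h2 : GammaDecomp μ ε₂ δ₂ η ρ) :
    GammaDecomp μ (ε₁ + ε₂) (δ₁ + δ₂) ν ρ := by
  obtain ⟨n, f, hn, hf, hνn, hηf, hs1, hD1⟩ := h1
  obtain ⟨g, r, hg, hr, hηg, hρr, hs2, hD2⟩ := h2
  have hs1 := gamma_cost hs1
  have hs2 := gamma_cost hs2
  haveI := MM_finite hη
  obtain ⟨m, hm1, hm2, hm3⟩ := coupling f g hηf hηg
  have hft : ∀ i, f i univ ≠ ⊤ := fun i => (MM_finite (hf i)).measure_univ_lt_top.ne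
  have hgt : ∀ i, g i univ ≠ ⊤ := fun i => (MM_finite (hg i)).measure_univ_lt_top.ne
  obtain ⟨w, a, hw1, hw2, hw3, ha, ha', hw0⟩ : ∃ (w : ℕ → ℕ → ℝ≥0∞) (a : ℕ → ℝ≥0∞),
      (∀ i, ∑' j, w i j + a i = 1) ∧ (∀ i j, w i j ≤ 1) ∧
      (∀ i j, (w i j).toReal * mass (f i) = (m i j).toReal) ∧ (∀ i, a i ≤ 1) ∧
      (∀ i, (a i).toReal * mass (f i) = 0) ∧ ∀ i j, m i j = 0 → w i j = 0 := by
    refine ⟨fun i j => m i j / f i univ, fun i => if f i univ = 0 then 1 else 0,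
      fun i => (weights (hft i) (hm1 i)).1, fun i => (weights (hft i) (hm1 i)).2.1,
      fun i => (weights (hft i) (hm1 i)).2.2, ?_, ?_, ?_⟩
    · intro i; dsimp only; split_ifs <;> simp
    · intro i; dsimp only; split_ifs with h0 <;> simp [mass, h0]
    · intro i j h0; simp [h0]
  obtain ⟨v, b, hv1, hv2, hv3, hb, hb', hv0⟩ : ∃ (v : ℕ → ℕ → ℝ≥0∞) (b : ℕ → ℝ≥0∞),
      (∀ j, ∑' i, v i j + b j = 1) ∧ (∀ i j, v i j ≤ 1) ∧
      (∀ i j, (v i j).toReal * mass (g j) = (m i j).toReal) ∧ (∀ j, b j ≤ 1) ∧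
      (∀ j, (b j).toReal * mass (g j) = 0) ∧ ∀ i j, m i j = 0 → v i j = 0 := by
    refine ⟨fun i j => m i j / g j univ, fun j => if g j univ = 0 then 1 else 0,
      fun j => (weights (hgt j) (hm2 j)).1, fun i j => (weights (hgt j) (hm2 j)).2.1 i,
      fun i j => (weights (hgt j) (hm2 j)).2.2 i, ?_, ?_, ?_⟩
    · intro i; dsimp only; split_ifs <;> simp
    · intro i; dsimp only; split_ifs with h0 <;> simp [mass, h0]
    · intro i j h0; simp [h0]
  have hW : ∀ D : ℕ → ℝ≥0∞, (∑' p : ℕ × ℕ, w p.1 p.2 * D p.1) + ∑' i, a i * D i = ∑' i, D i := by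
    intro D
    rw [ENNReal.tsum_prod (f := fun i j => w i j * D i)]
    simp_rw [ENNReal.tsum_mul_right]
    rw [← ENNReal.tsum_add]
    simp_rw [← add_mul, hw1, one_mul]
  have hV : ∀ D : ℕ → ℝ≥0∞, (∑' p : ℕ × ℕ, v p.1 p.2 * D p.2) + ∑' i, b i * D i = ∑' i, D i := by
    intro D
    rw [ENNReal.tsum_prod (f := fun i j => v i j * D j), ENNReal.tsum_comm]
    simp_rw [ENNReal.tsum_mul_right]
    rw [← ENNReal.tsum_add]
    simp_rw [← add_mul, hv1, one_mul]
  refine gamma_mk (ι := (ℕ × ℕ) ⊕ (ℕ ⊕ ℕ)) (add_nonneg hd1 hd2)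
    (Sum.elim (fun p => w p.1 p.2 • n p.1) (Sum.elim (fun i => a i • n i) (fun _ => 0)))
    (Sum.elim (fun p => v p.1 p.2 • r p.2) (Sum.elim (fun _ => 0) (fun j => b j • r j)))
    ?_ ?_ ?_ ?_ ?_ ?_
  · rintro (p | i | j)
    · exact MM_of_le (hn p.1) (smul_le (hw2 _ _) _)
    · exact MM_of_le (hn i) (smul_le (ha _) _)
    · exact zero_mem_MM μ
  · rintro (p | i | j)
    · exact MM_of_le (hr p.2) (smul_le (hv2 _ _) _)
    · exact zero_mem_MM μ
    · exact MM_of_le (hr j) (smul_le (hb _) _)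
  · ext s hs
    rw [Measure.sum_apply _ hs, tsum_sumtype, tsum_sumtype, hνn, Measure.sum_apply _ hs]
    simpa using (hW (fun i => n i s)).symm
  · ext s hs
    rw [Measure.sum_apply _ hs, tsum_sumtype, tsum_sumtype, hρr, Measure.sum_apply _ hs]
    simpa using (hV (fun i => r i s)).symm
  · rw [tsum_sumtype, tsum_sumtype]
    simp only [Sum.elim_inl, Sum.elim_inr]
    have c1 : ∀ p : ℕ × ℕ, cost (w p.1 p.2 • n p.1) (v p.1 p.2 • r p.2) ≤
        w p.1 p.2 * cost (n p.1) (f p.1) + v p.1 p.2 * cost (g p.2) (r p.2) := by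
      rintro ⟨i, j⟩
      dsimp only
      have hwt : w i j ≠ ⊤ := ne_top_of_le_ne_top ENNReal.one_ne_top (hw2 i j)
      have hvt : v i j ≠ ⊤ := ne_top_of_le_ne_top ENNReal.one_ne_top (hv2 i j)
      unfold cost
      nth_rewrite 2 [← ENNReal.ofReal_toReal hwt]
      nth_rewrite 2 [← ENNReal.ofReal_toReal hvt]
      rw [← ENNReal.ofReal_mul ENNReal.toReal_nonneg, ← ENNReal.ofReal_mul ENNReal.toReal_nonneg,
        ← ENNReal.ofReal_add (by positivity) (by positivity)]
      apply ENNReal.ofReal_le_ofReal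
      rw [mass_smul, mass_smul]
      have e1 : (w i j).toReal * |mass (n i) - mass (f i)|
          = |(w i j).toReal * mass (n i) - (m i j).toReal| := by
        rw [← hw3, ← mul_sub, abs_mul, abs_of_nonneg ENNReal.toReal_nonneg]
      have e2 : (v i j).toReal * |mass (g j) - mass (r j)|
          = |(m i j).toReal - (v i j).toReal * mass (r j)| := by
        rw [← hv3, ← mul_sub, abs_mul, abs_of_nonneg ENNReal.toReal_nonneg]
      rw [e1, e2]
      exact abs_sub_le _ _ _
    have c2 : ∀ i, cost (a i • n i) 0 ≤ a i * cost (n i) (f i) := by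
      intro i
      have hat : a i ≠ ⊤ := ne_top_of_le_ne_top ENNReal.one_ne_top (ha i)
      unfold cost
      nth_rewrite 2 [← ENNReal.ofReal_toReal hat]
      rw [← ENNReal.ofReal_mul ENNReal.toReal_nonneg]
      apply ENNReal.ofReal_le_ofReal
      rw [mass_smul, mass_zero, ← ha' i, ← mul_sub, abs_mul, abs_of_nonneg ENNReal.toReal_nonneg]
    have c3 : ∀ j, cost 0 (b j • r j) ≤ b j * cost (g j) (r j) := by
      intro i
      have hat : b i ≠ ⊤ := ne_top_of_le_ne_top ENNReal.one_ne_top (hb i)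
      unfold cost
      nth_rewrite 2 [← ENNReal.ofReal_toReal hat]
      rw [← ENNReal.ofReal_mul ENNReal.toReal_nonneg]
      apply ENNReal.ofReal_le_ofReal
      rw [mass_smul, mass_zero, ← hb' i, ← mul_sub, abs_mul, abs_of_nonneg ENNReal.toReal_nonneg]
    calc _ ≤ (∑' p : ℕ × ℕ, (w p.1 p.2 * cost (n p.1) (f p.1) + v p.1 p.2 * cost (g p.2) (r p.2)))
          + (∑' i, a i * cost (n i) (f i) + ∑' j, b j * cost (g j) (r j)) :=
          add_le_add (ENNReal.tsum_le_tsum c1)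
            (add_le_add (ENNReal.tsum_le_tsum c2) (ENNReal.tsum_le_tsum c3))
      _ = ∑' i, cost (n i) (f i) + ∑' j, cost (g j) (r j) := by
          rw [← hW (fun i => cost (n i) (f i)), ← hV (fun j => cost (g j) (r j)), ENNReal.tsum_add]
          exact add_add_add_comm _ _ _ _
      _ ≤ ENNReal.ofReal δ₁ + ENNReal.ofReal δ₂ := add_le_add hs1 hs2
      _ = _ := (ENNReal.ofReal_add hd1 hd2).symm
  · rintro (⟨i, j⟩ | i | j)
    · simp only [Sum.elim_inl]
      by_cases h0 : m i j = 0
      · simp [hw0 i j h0, hv0 i j h0, add_nonneg he1 he2]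
      · obtain ⟨x, hx1, hx2⟩ := hm3 i j h0
        have hb1 := ((hn i).2.union (hf i).2).isBounded
        have hb2 := ((hg j).2.union (hr j).2).isBounded
        calc _ ≤ Metric.diam ((msupp (n i) ∪ msupp (f i)) ∪ (msupp (g j) ∪ msupp (r j))) := by
              refine Metric.diam_mono ?_ (hb1.union hb2)
              refine union_subset_union ?_ ?_
              · exact (msupp_mono (smul_le (hw2 _ _) _)).trans subset_union_left
              · exact (msupp_mono (smul_le (hv2 _ _) _)).trans subset_union_right
          _ ≤ _ := Metric.diam_union' ⟨x, Or.inr hx1, Or.inl hx2⟩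
          _ ≤ _ := add_le_add (hD1 i) (hD2 j)
    · simp only [Sum.elim_inl, Sum.elim_inr, msupp_zero, union_empty]
      calc _ ≤ Metric.diam (msupp (n i) ∪ msupp (f i)) :=
            Metric.diam_mono ((msupp_mono (smul_le (ha _) _)).trans subset_union_left)
              ((hn i).2.union (hf i).2).isBounded
        _ ≤ ε₁ := hD1 i
        _ ≤ _ := le_add_of_nonneg_right he2
    · simp only [Sum.elim_inr, msupp_zero, empty_union]
      calc _ ≤ Metric.diam (msupp (g j) ∪ msupp (r j)) :=
            Metric.diam_mono ((msupp_mono (smul_le (hb _) _)).trans subset_union_right)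
              ((hg j).2.union (hr j).2).isBounded
        _ ≤ ε₂ := hD2 j
        _ ≤ _ := le_add_of_nonneg_left he1

end MT

/-- `d_𝓜` is a metric on `𝓜`. -/
theorem stmt3 {X : Type*} [MetricSpace X] [MeasurableSpace X] [BorelSpace X]
    [LocallyCompactSpace X] [TopologicalSpace.SeparableSpace X]
    (μ : Measure X) [μ.Regular]
    (hμ : ∀ (x : X) (r : ℝ), 0 < r → 0 < μ (Metric.ball x r) ∧ μ (Metric.ball x r) < ⊤)
    (h : ℝ → ℝ) (hh : IsGauge h) :
    (∀ ν η : Measure X, 0 ≤ dM h μ ν η) ∧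
    (∀ ν ∈ MM μ, dM h μ ν ν = 0) ∧
    (∀ ν ∈ MM μ, ∀ η ∈ MM μ, dM h μ ν η = 0 → ν = η) ∧
    (∀ ν η : Measure X, dM h μ ν η = dM h μ η ν) ∧
    (∀ ν ∈ MM μ, ∀ η ∈ MM μ, ∀ ρ ∈ MM μ, dM h μ ν ρ ≤ dM h μ ν η + dM h μ η ρ) := by
  haveI : IsFiniteMeasureOnCompacts μ := inferInstance
  have hbdd : ∀ ν η : Measure X, BddBelow {ε : ℝ | 0 < ε ∧ GammaDecomp μ ε (h ε) ν η} :=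
    fun ν η => ⟨0, fun ε hε => hε.1.le⟩
  have hnn : ∀ ν η : Measure X, 0 ≤ dM h μ ν η := fun ν η =>
    Real.sInf_nonneg fun ε hε => hε.1.le
  refine ⟨hnn, ?_, ?_, fun ν η => MT.dM_symm h μ ν η, ?_⟩
  · intro ν hν
    refine le_antisymm (le_of_forall_pos_le_add fun ε hε => ?_) (hnn _ _)
    rw [zero_add]
    exact csInf_le (hbdd ν ν) ⟨hε, MT.gamma_self hν hε (MT.gauge_pos hh hε).le⟩
  · intro ν hν η hη h0
    haveI := MT.MM_finite hν
    have key : ∀ F : Set X, IsClosed F → ν F = η F := fun F hF =>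
      le_antisymm (MT.le_of_dM_zero hh hν hη h0 F hF)
        (MT.le_of_dM_zero hh hη hν (by rw [MT.dM_symm, h0]) F hF)
    refine ext_of_generate_finite {s | IsClosed s} ?_ ?_ key (key univ isClosed_univ)
    · rw [BorelSpace.measurable_eq (α := X), borel_eq_generateFrom_isClosed]
    · exact fun s hs t ht _ => IsClosed.inter hs ht
  · intro ν hν η hη ρ hρ
    refine le_of_forall_pos_le_add fun ε hε => ?_
    obtain ⟨a, ha, ha'⟩ := exists_lt_of_csInf_lt (MT.set_nonempty hh hν hη)
      (lt_add_of_pos_right (dM h μ ν η) (half_pos hε))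
    obtain ⟨b, hb, hb'⟩ := exists_lt_of_csInf_lt (MT.set_nonempty hh hη hρ)
      (lt_add_of_pos_right (dM h μ η ρ) (half_pos hε))
    have hab := MT.gamma_trans hη ha.1.le hb.1.le (MT.gauge_pos hh ha.1).le
      (MT.gauge_pos hh hb.1).le ha.2 hb.2
    have hab' : GammaDecomp μ (a + b) (h (a + b)) ν ρ := by
      obtain ⟨f, g, h1, h2, h3, h4, ⟨S, hS, hS'⟩, h6⟩ := hab
      exact ⟨f, g, h1, h2, h3, h4,
        ⟨S, hS, hS'.trans (hh.2.2.2.2.1 a b ha.1.le hb.1.le)⟩, h6⟩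
    have := csInf_le (hbdd ν ρ) ⟨add_pos ha.1 hb.1, hab'⟩
    change dM h μ ν ρ ≤ a + b at this
    linarith
end

section
/- Locality of upper gradients in X: if k ∈ L¹_loc(X) has an upper gradient g_k ∈ L¹_loc(X) (i.e., r_{F_k} = F_{g_k}) and c ∈ ℝ, then g_{k∧c} = g_k·χ_{{k<c}} and g_{k∨c} = g_k·χ_{{k>c}} μ-almost everywhere. -/
open MeasureTheory Set Filter
open scoped ENNReal Classical

variable {X : Type*} [MetricSpace X] [MeasurableSpace X]

section Aux

set_option linter.unusedSectionVars false

open ProbabilityTheory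

variable [BorelSpace X] [SecondCountableTopology X]

theorem isClosed_msupp (ν : Measure X) : IsClosed (msupp ν) := by
  rw [← isOpen_compl_iff, Metric.isOpen_iff]
  intro x hx
  simp only [msupp, mem_compl_iff, mem_ofPred_eq, not_forall, not_lt, nonpos_iff_eq_zero] at hx
  obtain ⟨ε, hε, h0⟩ := hx
  refine ⟨ε / 2, by positivity, fun y hy hy' => ?_⟩
  have := hy' (ε / 2) (by positivity)
  refine absurd (measure_mono_null (Metric.ball_subset_ball' ?_) h0) this.ne'
  rw [Metric.mem_ball] at hy
  linarith

theorem measure_msupp_compl (ν : Measure X) : ν (msupp ν)ᶜ = 0 := by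
  refine measure_null_of_locally_null _ fun x hx => ?_
  simp only [msupp, mem_compl_iff, mem_ofPred_eq, not_forall, not_lt, nonpos_iff_eq_zero] at hx
  obtain ⟨ε, hε, h0⟩ := hx
  exact ⟨_, mem_nhdsWithin_of_mem_nhds (Metric.ball_mem_nhds x hε), h0⟩

theorem msupp_mono {ν η : Measure X} (hle : ν ≤ η) : msupp ν ⊆ msupp η :=
  fun _ hx ε hε => (hx ε hε).trans_le (hle _)

theorem msupp_subset_of_null {ν : Measure X} {C : Set X} (hC : IsClosed C) (h0 : ν Cᶜ = 0) :
    msupp ν ⊆ C := by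
  intro x hx
  by_contra hxC
  obtain ⟨ε, hε, hb⟩ := Metric.isOpen_iff.1 hC.isOpen_compl x hxC
  exact absurd (measure_mono_null hb h0) (hx ε hε).ne'

theorem mem_MM_of_le {μ ν η : Measure X} (hη : η ∈ MM μ) (hle : ν ≤ η) : ν ∈ MM μ :=
  ⟨hle.trans hη.1, hη.2.of_isClosed_subset (isClosed_msupp ν) (msupp_mono hle)⟩

theorem mem_MM_of_compact {μ ν : Measure X} {K : Set X} (hK : IsCompact K) (hle : ν ≤ μ)
    (h0 : ν Kᶜ = 0) : ν ∈ MM μ :=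
  ⟨hle, hK.of_isClosed_subset (isClosed_msupp ν) (msupp_subset_of_null hK.isClosed h0)⟩

theorem isFinite_of_mem_MM {μ : Measure X} [IsFiniteMeasureOnCompacts μ] {ν : Measure X}
    (hν : ν ∈ MM μ) : IsFiniteMeasure ν := by
  refine ⟨?_⟩
  have : ν univ ≤ ν (msupp ν) + ν (msupp ν)ᶜ := by
    rw [← union_compl_self (msupp ν)]; exact measure_union_le _ _
  rw [measure_msupp_compl, add_zero] at this
  exact this.trans_lt ((hν.1 _).trans_lt hν.2.measure_lt_top)

theorem GammaDecomp.symm' {μ : Measure X} {ε δ : ℝ} {ν η : Measure X}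
    (H : GammaDecomp μ ε δ ν η) : GammaDecomp μ ε δ η ν := by
  obtain ⟨νi, ηi, h1, h2, h3, h4, ⟨S, hS, hS'⟩, h6⟩ := H
  refine ⟨ηi, νi, h2, h1, h4, h3, ⟨S, ?_, hS'⟩, fun i => ?_⟩
  · simpa only [abs_sub_comm] using hS
  · rw [union_comm]; exact h6 i

theorem dM_comm (h : ℝ → ℝ) (μ ν η : Measure X) : dM h μ ν η = dM h μ η ν := by
  unfold dM
  congr 1
  ext ε
  exact ⟨fun H => ⟨H.1, H.2.symm'⟩, fun H => ⟨H.1, H.2.symm'⟩⟩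

theorem IsGauge.nonneg {h : ℝ → ℝ} (hh : IsGauge h) {x : ℝ} (hx : 0 ≤ x) : 0 ≤ h x := by
  rw [← hh.2.2.1]
  exact hh.1.monotoneOn (by simp) hx hx

/-- If `d_𝓜(ν,η) < r` then there is a decomposition at scale `r`. -/
theorem gamma_of_dM_lt {h : ℝ → ℝ} (hh : IsGauge h) {μ : Measure X}
    {ν η : Measure X} (hν : ν ∈ MM μ) (hη : η ∈ MM μ) {r : ℝ} (hr : dM h μ ν η < r) :
    GammaDecomp μ r (h r) ν η := by
  have hne : {ε : ℝ | 0 < ε ∧ GammaDecomp μ ε (h ε) ν η}.Nonempty := by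
    have h1 : ∀ᶠ ε in atTop, |mass ν - mass η| ≤ h ε := hh.2.2.2.2.2.eventually_ge_atTop _
    obtain ⟨ε, hε1, hε2, hε3⟩ := (h1.and ((eventually_gt_atTop (0:ℝ)).and
      (eventually_ge_atTop (Metric.diam (msupp ν ∪ msupp η))))).exists
    have hm0 : msupp (0 : Measure X) = ∅ := by
      ext x; simp only [msupp, mem_ofPred_eq, Measure.coe_zero, Pi.zero_apply, lt_self_iff_false,
        mem_empty_iff_false, iff_false, not_forall]
      exact ⟨1, one_pos, id⟩
    have h0 : (0 : Measure X) ∈ MM μ := ⟨Measure.zero_le _, by rw [hm0]; exact isCompact_empty⟩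
    have hs : ∀ ν : Measure X, ν = Measure.sum (fun i : ℕ => if i = 0 then ν else 0) := by
      intro ν
      ext s hs
      rw [Measure.sum_apply _ hs, tsum_eq_single 0]
      · simp
      · intro b hb; simp [hb]
    refine ⟨ε, hε2, fun i => if i = 0 then ν else 0, fun i => if i = 0 then η else 0, ?_, ?_,
      hs ν, hs η, ⟨|mass ν - mass η|, ?_, hε1⟩, ?_⟩
    · intro i; dsimp only; split_ifs
      · exact hν
      · exact h0
    · intro i; dsimp only; split_ifs
      · exact hη
      · exact h0
    · have := hasSum_single (f := fun i : ℕ => |mass (if i = 0 then ν else 0) -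
        mass (if i = 0 then η else 0)|) 0 (fun i hi => by simp [hi])
      simpa using this
    · intro i; dsimp only; split_ifs
      · exact hε3
      · simp [hm0, hε2.le]
  obtain ⟨ε, ⟨hε, νi, ηi, h1, h2, h3, h4, ⟨S, hS, hS'⟩, h6⟩, hεr⟩ := exists_lt_of_csInf_lt hne hr
  exact ⟨νi, ηi, h1, h2, h3, h4, ⟨S, hS, hS'.trans
    (hh.1.monotoneOn hε.le (hε.le.trans hεr.le) hεr.le)⟩, fun i => (h6 i).trans hεr.le⟩

/-- A sub-Markov kernel of range at most `ε` losing mass at most `δ` when applied to `ν`. -/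
structure Step (ε : ℝ) (δ : ℝ≥0∞) (ν : Measure X) (κ : Kernel X X) : Prop where
  sub : ∀ x, κ x univ ≤ 1
  range : ∀ x, κ x {y | ε < dist x y} = 0
  loss : ∫⁻ x, (1 - κ x univ) ∂ν ≤ δ

theorem bind_mono' {ν η : Measure X} (hle : ν ≤ η) (κ : Kernel X X) : ν.bind κ ≤ η.bind κ := by
  refine Measure.le_iff.2 fun s hs => ?_
  rw [Measure.bind_apply hs κ.measurable.aemeasurable,
    Measure.bind_apply hs κ.measurable.aemeasurable]
  exact lintegral_mono' hle le_rfl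

theorem Step.mono {ε : ℝ} {δ : ℝ≥0∞} {ν η : Measure X} {κ : Kernel X X}
    (H : Step ε δ η κ) (hle : ν ≤ η) : Step ε δ ν κ :=
  ⟨H.sub, H.range, (lintegral_mono' hle le_rfl).trans H.loss⟩

theorem Step.id (ν : Measure X) : Step 0 0 ν (Kernel.id : Kernel X X) := by
  refine ⟨fun x => by simp [Kernel.id_apply], fun x => ?_, by simp [Kernel.id_apply]⟩
  rw [Kernel.id_apply, Measure.dirac_apply' _ (measurableSet_lt (by fun_prop) (by fun_prop))]
  simp

theorem Step.comp {ε₁ ε₂ : ℝ} {δ₁ δ₂ : ℝ≥0∞} {ν : Measure X} {κ l : Kernel X X}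
    (H₁ : Step ε₁ δ₁ ν κ) (H₂ : Step ε₂ δ₂ (ν.bind κ) l) :
    Step (ε₁ + ε₂) (δ₁ + δ₂) ν (l ∘ₖ κ) := by
  have hm : Measurable fun y => l y univ := l.measurable_coe .univ
  have hmk : Measurable fun y => κ y univ := κ.measurable_coe .univ
  refine ⟨fun x => ?_, fun x => ?_, ?_⟩
  · rw [Kernel.comp_apply' _ _ _ .univ]
    calc ∫⁻ y, l y univ ∂(κ x) ≤ ∫⁻ y, 1 ∂(κ x) := lintegral_mono fun y => H₂.sub y
      _ ≤ 1 := by simpa using H₁.sub x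
  · rw [Kernel.comp_apply' _ _ _ (measurableSet_lt (by fun_prop) (by fun_prop))]
    have : ∀ᵐ y ∂(κ x), l y {z | ε₁ + ε₂ < dist x z} = 0 := by
      have h1 : ∀ᵐ y ∂(κ x), ¬ (ε₁ < dist x y) := by
        rw [ae_iff]; simpa using H₁.range x
      filter_upwards [h1] with y hy
      refine measure_mono_null ?_ (H₂.range y)
      intro z hz
      simp only [mem_ofPred_eq] at hz ⊢
      have := dist_triangle x y z
      linarith
    rw [lintegral_congr_ae this]; simp
  · have hp : ∀ x, 1 - (l ∘ₖ κ) x univ ≤ (1 - κ x univ) + ∫⁻ y, (1 - l y univ) ∂(κ x) := by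
      intro x
      rw [tsub_le_iff_right, Kernel.comp_apply' _ _ _ .univ, add_assoc,
        ← lintegral_add_right _ hm]
      have : ∫⁻ y, (1 - l y univ + l y univ) ∂(κ x) = κ x univ := by
        rw [lintegral_congr (g := fun _ => 1)]
        · simp
        · intro y; exact tsub_add_cancel_of_le (H₂.sub y)
      rw [this]
      exact le_tsub_add
    calc ∫⁻ x, (1 - (l ∘ₖ κ) x univ) ∂ν
        ≤ ∫⁻ x, ((1 - κ x univ) + ∫⁻ y, (1 - l y univ) ∂(κ x)) ∂ν := lintegral_mono hp
      _ = ∫⁻ x, (1 - κ x univ) ∂ν + ∫⁻ y, (1 - l y univ) ∂(ν.bind κ) := by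
        rw [lintegral_add_left (f := fun x => 1 - κ x univ) (measurable_const.sub hmk),
          Measure.lintegral_bind (f := fun y => 1 - l y univ) κ.measurable.aemeasurable
            (measurable_const.sub hm).aemeasurable]
      _ ≤ δ₁ + δ₂ := add_le_add H₁.loss H₂.loss

theorem bind_comp' (ν : Measure X) (κ l : Kernel X X) :
    ν.bind (l ∘ₖ κ) = (ν.bind κ).bind l := by
  rw [Measure.bind_bind κ.measurable.aemeasurable l.measurable.aemeasurable]
  congr 1

/-- Mass lost under a step. -/
theorem Step.mass_le {ε : ℝ} {δ : ℝ≥0∞} {ν : Measure X} {κ : Kernel X X}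
    (H : Step ε δ ν κ) : ν univ ≤ (ν.bind κ) univ + δ := by
  have hmk : Measurable fun y => κ y univ := κ.measurable_coe .univ
  rw [Measure.bind_apply .univ κ.measurable.aemeasurable]
  calc ν univ = ∫⁻ x, (κ x univ + (1 - κ x univ)) ∂ν := by
        rw [lintegral_congr (g := fun _ => 1)]
        · simp
        · intro y; exact add_tsub_cancel_of_le (H.sub y)
    _ = ∫⁻ x, κ x univ ∂ν + ∫⁻ x, (1 - κ x univ) ∂ν := lintegral_add_left hmk _
    _ ≤ _ := by gcongr; exact H.loss

theorem Step.bind_mass_le {ε : ℝ} {δ : ℝ≥0∞} {ν : Measure X} {κ : Kernel X X}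
    (H : Step ε δ ν κ) : (ν.bind κ) univ ≤ ν univ := by
  rw [Measure.bind_apply .univ κ.measurable.aemeasurable]
  calc ∫⁻ x, κ x univ ∂ν ≤ ∫⁻ x, 1 ∂ν := lintegral_mono fun y => H.sub y
    _ = _ := by simp

/-- A decomposition gives a transport kernel. -/
theorem step_of_gamma {μ : Measure X} [IsFiniteMeasureOnCompacts μ] {ε δ : ℝ}
    {ν η : Measure X} [IsFiniteMeasure ν] (H : GammaDecomp μ ε δ ν η) :
    ∃ κ : Kernel X X, Step ε (ENNReal.ofReal δ) ν κ ∧ ν.bind κ ≤ η := by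
  obtain ⟨νi, ηi, h1, h2, h3, h4, ⟨S, hS, hS'⟩, h6⟩ := H
  have hf1 : ∀ i, IsFiniteMeasure (νi i) := fun i => isFinite_of_mem_MM (h1 i)
  have hf2 : ∀ i, IsFiniteMeasure (ηi i) := fun i => isFinite_of_mem_MM (h2 i)
  have hle : ∀ i, νi i ≤ ν := fun i => by rw [h3]; exact Measure.le_sum νi i
  -- densities
  let ρ : ℕ → X → ℝ≥0∞ := fun i => (νi i).rnDeriv ν
  have hρ : ∀ i, Measurable (ρ i) := fun i => Measure.measurable_rnDeriv _ _
  have hρd : ∀ i, ν.withDensity (ρ i) = νi i := fun i =>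
    Measure.withDensity_rnDeriv_eq _ _ (hle i).absolutelyContinuous
  have hsum : ∀ᵐ x ∂ν, ∑' i, ρ i x = 1 := by
    have hd : ν.withDensity (fun x => ∑' i, ρ i x) = ν.withDensity (fun _ => 1) := by
      have e1 : (fun x => ∑' i, ρ i x) = ∑' i, ρ i := by
        ext x; rw [ENNReal.tsum_apply]
      rw [e1, withDensity_tsum hρ]
      simp only [hρd]
      rw [← h3]
      exact withDensity_one.symm
    exact (withDensity_eq_iff (Measurable.tsum hρ).aemeasurable
      aemeasurable_const (by
        rw [← setLIntegral_univ, ← withDensity_apply _ .univ, hd]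
        simp)).1 hd
  let G : Set X := {x | ∑' i, ρ i x ≤ 1}
  have hG : MeasurableSet G := measurableSet_le (Measurable.tsum hρ) measurable_const
  let w : ℕ → X → ℝ≥0∞ := fun i => (G ∩ msupp (νi i)).indicator (ρ i)
  have hw : ∀ i, Measurable (w i) := fun i =>
    (hρ i).indicator (hG.inter (isClosed_msupp _).measurableSet)
  have hwd : ∀ i, ∫⁻ x, w i x ∂ν = νi i univ := by
    intro i
    rw [lintegral_indicator (hG.inter (isClosed_msupp _).measurableSet),
      ← withDensity_apply _ (hG.inter (isClosed_msupp _).measurableSet), hρd]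
    refine measure_congr ?_
    rw [eventuallyEq_univ]
    have a1 : ∀ᵐ x ∂(νi i), x ∈ G :=
      (hle i).absolutelyContinuous.ae_le (hsum.mono fun x hx => hx.le)
    have a2 : ∀ᵐ x ∂(νi i), x ∈ msupp (νi i) := measure_msupp_compl _
    filter_upwards [a1, a2] with x hx hx' using ⟨hx, hx'⟩
  have hw1 : ∀ x, ∑' i, w i x ≤ 1 := by
    intro x
    by_cases hx : x ∈ G
    · refine (ENNReal.tsum_le_tsum fun i => ?_).trans hx
      exact indicator_le_self _ _ _
    · have : ∀ i, w i x = 0 := fun i => indicator_of_notMem (fun h => hx h.1) _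
      simp [this]
  let c : ℕ → ℝ≥0∞ := fun i => (max (νi i univ) (ηi i univ))⁻¹
  have hcη : ∀ i, c i * ηi i univ ≤ 1 := by
    intro i
    calc c i * ηi i univ ≤ c i * max (νi i univ) (ηi i univ) := by gcongr; exact le_max_right _ _
      _ ≤ 1 := ENNReal.inv_mul_le_one _
  have hcν : ∀ i, c i * νi i univ ≤ 1 := by
    intro i
    calc c i * νi i univ ≤ c i * max (νi i univ) (ηi i univ) := by gcongr; exact le_max_left _ _
      _ ≤ 1 := ENNReal.inv_mul_le_one _
  let κ : Kernel X X :=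
    { toFun := fun x => Measure.sum fun i => (w i x * c i) • ηi i
      measurable' := by
        refine Measure.measurable_of_measurable_coe _ fun s hs => ?_
        simp only [Measure.sum_apply _ hs, Measure.smul_apply, smul_eq_mul]
        exact Measurable.tsum fun i => ((hw i).mul_const _).mul_const _ }
  have hκ : ∀ x s, MeasurableSet s → κ x s = ∑' i, w i x * c i * ηi i s := by
    intro x s hs
    change (Measure.sum fun i => (w i x * c i) • ηi i) s = _
    simp only [Measure.sum_apply _ hs, Measure.smul_apply, smul_eq_mul]
  have hbind : ∀ s, MeasurableSet s → (ν.bind κ) s = ∑' i, νi i univ * c i * ηi i s := by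
    intro s hs
    rw [Measure.bind_apply hs κ.measurable.aemeasurable]
    simp only [hκ _ s hs]
    rw [lintegral_tsum fun i => (((hw i).mul_const _).mul_const _).aemeasurable]
    congr 1; ext i
    rw [lintegral_mul_const _ ((hw i).mul_const _), lintegral_mul_const _ (hw i), hwd]
  have hsub : ∀ x, κ x univ ≤ 1 := by
    intro x
    rw [hκ _ _ .univ]
    refine (ENNReal.tsum_le_tsum fun i => ?_).trans (hw1 x)
    rw [mul_assoc]
    exact mul_le_of_le_one_right' (hcη i)
  have hkm : Measurable fun y => κ y univ := κ.measurable_coe .univ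
  have hbm : (ν.bind κ) univ ≤ ν univ := by
    rw [Measure.bind_apply .univ κ.measurable.aemeasurable]
    calc ∫⁻ x, κ x univ ∂ν ≤ ∫⁻ x, 1 ∂ν := lintegral_mono fun y => hsub y
      _ = _ := by simp
  refine ⟨κ, ⟨hsub, fun x => ?_, ?_⟩, ?_⟩
  · rw [hκ _ _ (measurableSet_lt (by fun_prop) (by fun_prop)), ENNReal.tsum_eq_zero]
    intro i
    by_cases hx : x ∈ msupp (νi i)
    · have : ηi i {y | ε < dist x y} = 0 := by
        refine measure_mono_null ?_ (measure_msupp_compl (ηi i))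
        intro y hy hy'
        have := Metric.dist_le_diam_of_mem ((h1 i).2.union (h2 i).2).isBounded
          (Or.inl hx) (Or.inr hy')
        simp only [mem_ofPred_eq] at hy
        linarith [h6 i]
      simp [this]
    · have : w i x = 0 := indicator_of_notMem (fun h => hx h.2) _
      simp [this]
  · have e : ∫⁻ x, (1 - κ x univ) ∂ν = ν univ - (ν.bind κ) univ := by
      rw [lintegral_sub hkm, ← Measure.bind_apply .univ κ.measurable.aemeasurable]
      · simp
      · rw [← Measure.bind_apply .univ κ.measurable.aemeasurable]
        exact (hbm.trans_lt (measure_lt_top _ _)).ne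
      · exact Eventually.of_forall hsub
    rw [e, tsub_le_iff_right, hbind _ .univ]
    have e2 : ν univ = ∑' i, νi i univ := by
      conv_lhs => rw [h3]
      rw [Measure.sum_apply _ .univ]
    rw [e2]
    have e3 : ∀ i, νi i univ ≤ ENNReal.ofReal |mass (νi i) - mass (ηi i)|
        + νi i univ * c i * ηi i univ := by
      intro i
      rcases le_total (νi i univ) (ηi i univ) with hc | hc
      · have : νi i univ * c i * ηi i univ = νi i univ := by
          simp only [c, max_eq_right hc]
          by_cases h0 : ηi i univ = 0
          · have : νi i univ = 0 := by simpa [h0] using hc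
            simp [this]
          · rw [mul_assoc, ENNReal.inv_mul_cancel h0 (measure_ne_top _ _), mul_one]
        rw [this]; exact le_add_self
      · have : νi i univ * c i * ηi i univ = ηi i univ := by
          simp only [c, max_eq_left hc]
          by_cases h0 : νi i univ = 0
          · have : ηi i univ = 0 := by simpa [h0] using hc
            simp [this]
          · rw [ENNReal.mul_inv_cancel h0 (measure_ne_top _ _), one_mul]
        rw [this]
        have hm : mass (ηi i) ≤ mass (νi i) := ENNReal.toReal_mono (measure_ne_top _ _) hc
        rw [abs_of_nonneg (by linarith)]
        simp only [mass]
        rw [ENNReal.ofReal_sub _ ENNReal.toReal_nonneg]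
        rw [ENNReal.ofReal_toReal (measure_ne_top _ _), ENNReal.ofReal_toReal (measure_ne_top _ _)]
        exact le_tsub_add
    calc ∑' i, νi i univ ≤ ∑' i, (ENNReal.ofReal |mass (νi i) - mass (ηi i)|
        + νi i univ * c i * ηi i univ) := ENNReal.tsum_le_tsum e3
      _ = ∑' i, ENNReal.ofReal |mass (νi i) - mass (ηi i)|
        + ∑' i, νi i univ * c i * ηi i univ := ENNReal.tsum_add
      _ ≤ _ := by
        gcongr
        rw [← ENNReal.ofReal_tsum_of_nonneg (fun i => abs_nonneg _) hS.summable, hS.tsum_eq]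
        exact ENNReal.ofReal_le_ofReal hS'
  · refine Measure.le_iff.2 fun s hs => ?_
    rw [hbind s hs, h4, Measure.sum_apply _ hs]
    refine ENNReal.tsum_le_tsum fun i => ?_
    refine mul_le_of_le_one_left' ?_
    rw [mul_comm]; exact hcν i

/-- `W_∞(ν,η) ≤ r` (possibly with `η` heavier). -/
def WW (r : ℝ) (ν η : Measure X) : Prop :=
  ∀ δ : ℝ≥0∞, 0 < δ → ∃ κ : Kernel X X, Step r δ ν κ ∧ ν.bind κ ≤ η

theorem Step.weaken {ε ε' : ℝ} {δ δ' : ℝ≥0∞} {ν : Measure X} {κ : Kernel X X}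
    (H : Step ε δ ν κ) (h1 : ε ≤ ε') (h2 : δ ≤ δ') : Step ε' δ' ν κ :=
  ⟨H.sub, fun x => measure_mono_null (fun _ hy => lt_of_le_of_lt h1 hy) (H.range x),
    H.loss.trans h2⟩

theorem curve_WW {h : ℝ → ℝ} (hh : IsGauge h) {μ : Measure X} [IsFiniteMeasureOnCompacts μ]
    {b : ℝ} {γ : ℝ → Measure X} (hγ : IsCurveM h μ b γ) {s t : ℝ} (hs : 0 ≤ s) (hst : s ≤ t)
    (ht : t ≤ b) {r : ℝ} (hr : t - s < r) : WW r (γ s) (γ t) := by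
  intro δ hδ
  have hr0 : 0 < r := by linarith
  have hlim : Tendsto (fun N : ℕ => ENNReal.ofReal (r * (h (r / ((N : ℝ) + 1)) / (r / ((N : ℝ) + 1)))))
      atTop (nhds 0) := by
    have a1 : Tendsto (fun N : ℕ => r / ((N : ℝ) + 1)) atTop (nhdsWithin 0 (Ioi 0)) := by
      refine tendsto_nhdsWithin_iff.2 ⟨?_, Eventually.of_forall fun N => ?_⟩
      · simpa [div_eq_mul_inv] using
          (tendsto_one_div_add_atTop_nhds_zero_nat (𝕜 := ℝ)).const_mul r
      · simp only [mem_Ioi]; positivity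
    have a2 := (hh.2.2.2.1.comp a1).const_mul r
    rw [mul_zero] at a2
    have := ENNReal.tendsto_ofReal a2
    simpa using this
  obtain ⟨N, hN⟩ := ((tendsto_order.1 hlim).2 δ hδ).exists
  set M : ℝ := (N : ℝ) + 1 with hM
  have hM0 : 0 < M := by positivity
  have key : ∀ m : ℕ, (m : ℝ) ≤ M → ∃ κ : Kernel X X,
      Step (m * (r / M)) (m * ENNReal.ofReal (h (r / M))) (γ s) κ ∧
      (γ s).bind κ ≤ γ (s + m * ((t - s) / M)) := by
    intro m
    induction m with
    | zero =>
      intro _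
      refine ⟨Kernel.id, by simpa using Step.id (γ s), ?_⟩
      simp only [Nat.cast_zero, zero_mul, add_zero]
      exact (Measure.bind_dirac : (γ s).bind Measure.dirac = γ s).le
    | succ m ih =>
      intro hm
      push_cast at hm
      obtain ⟨κ, hκ, hle⟩ := ih (by linarith)
      have hb1 : 0 ≤ (m : ℝ) * ((t - s) / M) :=
        mul_nonneg (by positivity) (div_nonneg (by linarith) hM0.le)
      have hq : 0 ≤ (t - s) / M := div_nonneg (by linarith) hM0.le
      have hb2 : ((m : ℝ) + 1) * ((t - s) / M) ≤ t - s := by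
        calc ((m : ℝ) + 1) * ((t - s) / M) ≤ M * ((t - s) / M) := by gcongr
          _ = t - s := by field_simp
      have m1 : s + m * ((t - s) / M) ∈ Icc (0:ℝ) b := ⟨by linarith, by nlinarith⟩
      have m2 : s + ((m : ℝ) + 1) * ((t - s) / M) ∈ Icc (0:ℝ) b := ⟨by nlinarith, by linarith⟩
      have hd := hγ.2.2 _ m1 _ m2
      have hd' : dM h μ (γ (s + m * ((t - s) / M))) (γ (s + ((m : ℝ) + 1) * ((t - s) / M)))
          < r / M := by
        refine hd.trans_lt ?_
        rw [show s + m * ((t - s) / M) - (s + ((m : ℝ) + 1) * ((t - s) / M)) = -((t - s) / M) by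
          ring, abs_neg, abs_of_nonneg hq]
        gcongr
      have hfin := isFinite_of_mem_MM (hγ.2.1 _ m1)
      obtain ⟨l, hl, hle'⟩ := step_of_gamma (gamma_of_dM_lt hh (hγ.2.1 _ m1) (hγ.2.1 _ m2) hd')
      refine ⟨l ∘ₖ κ, (hκ.comp (hl.mono hle)).weaken (le_of_eq (by push_cast; ring))
        (le_of_eq (by push_cast; ring)), ?_⟩
      rw [bind_comp']
      push_cast
      exact (bind_mono' hle l).trans hle'
  obtain ⟨κ, hκ, hle⟩ := key (N + 1) (by push_cast; exact le_rfl)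
  refine ⟨κ, hκ.weaken (le_of_eq (by push_cast; rw [← hM]; field_simp)) ?_, ?_⟩
  · refine le_trans (le_of_eq ?_) hN.le
    rw [← ENNReal.ofReal_natCast, ← ENNReal.ofReal_mul (by positivity)]
    congr 1
    push_cast
    rw [← hM]
    field_simp
  · convert hle using 2
    push_cast
    rw [← hM]
    field_simp
    ring

theorem IsCurveM.reverse {h : ℝ → ℝ} {μ : Measure X} {b : ℝ} {γ : ℝ → Measure X}
    (hγ : IsCurveM h μ b γ) : IsCurveM h μ b (fun t => γ (b - t)) := by
  have hm : ∀ t ∈ Icc (0:ℝ) b, b - t ∈ Icc (0:ℝ) b := fun t ht =>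
    ⟨by linarith [ht.2], by linarith [ht.1]⟩
  refine ⟨hγ.1, fun t ht => hγ.2.1 _ (hm t ht), fun s hs t ht => ?_⟩
  refine (hγ.2.2 _ (hm s hs) _ (hm t ht)).trans (le_of_eq ?_)
  rw [abs_sub_comm]; congr 1; ring

theorem WW.mass_le {r : ℝ} {ν η : Measure X} (H : WW r ν η) : ν univ ≤ η univ := by
  refine ENNReal.le_of_forall_pos_le_add fun δ hδ _ => ?_
  obtain ⟨κ, hκ, hle⟩ := H δ (by simpa using hδ)
  exact hκ.mass_le.trans (by gcongr)

theorem curve_mass {h : ℝ → ℝ} (hh : IsGauge h) {μ : Measure X} [IsFiniteMeasureOnCompacts μ]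
    {b : ℝ} {γ : ℝ → Measure X} (hγ : IsCurveM h μ b γ) {t : ℝ} (ht0 : 0 ≤ t) (ht : t ≤ b) :
    γ t univ = γ 0 univ := by
  apply le_antisymm
  · have := (curve_WW hh hγ.reverse (s := b - t) (t := b) (by linarith) (by linarith) le_rfl
      (r := t + 1) (by linarith)).mass_le
    simpa using this
  · exact (curve_WW hh hγ le_rfl ht0 ht (r := t + 1) (by linarith)).mass_le


theorem exists_setwise_lim (U : Ultrafilter ℕ) (νn : ℕ → Measure X) (m : Measure X)
    [IsFiniteMeasure m] (hle : ∀ n, νn n ≤ m) :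
    ∃ ν : Measure X, ν ≤ m ∧
      ∀ A, MeasurableSet A → Tendsto (fun n => νn n A) U (nhds (ν A)) := by
  let L : Set X → ℝ≥0∞ := fun A => (U.map (fun n => νn n A)).lim
  have hL : ∀ A, Tendsto (fun n => νn n A) U (nhds (L A)) := fun A =>
    (U.map (fun n => νn n A)).le_nhds_lim
  have h0 : L ∅ = 0 := by
    refine tendsto_nhds_unique (hL ∅) ?_
    simp
  have hadd : ∀ ⦃f : ℕ → Set X⦄ (_ : ∀ i, MeasurableSet (f i)),
      Pairwise (Function.onFun Disjoint f) → L (⋃ i, f i) = ∑' i, L (f i) := by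
    intro f hf hd
    have hfin : ∑' i, m (f i) ≠ ∞ := by
      rw [← measure_iUnion hd hf]; exact measure_ne_top _ _
    have htail := ENNReal.tendsto_sum_nat_add (fun i => m (f i)) hfin
    have hsl : ∀ N : ℕ, Tendsto (fun n => ∑ i ∈ Finset.range N, νn n (f i)) U
        (nhds (∑ i ∈ Finset.range N, L (f i))) := fun N =>
      tendsto_finsetSum _ fun i _ => hL (f i)
    have hS := ENNReal.tendsto_nat_tsum (fun i => L (f i))
    apply le_antisymm
    · have hb : ∀ N : ℕ, L (⋃ i, f i) ≤
          ∑ i ∈ Finset.range N, L (f i) + ∑' k, m (f (k + N)) := by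
        intro N
        refine le_of_tendsto_of_tendsto' (hL _) ((hsl N).add tendsto_const_nhds) fun n => ?_
        rw [measure_iUnion hd hf, ← ENNReal.summable.sum_add_tsum_nat_add' (k := N)]
        exact add_le_add le_rfl (ENNReal.tsum_le_tsum fun k => hle n _)
      have := hS.add htail
      rw [add_zero] at this
      exact ge_of_tendsto' this hb
    · refine le_of_tendsto' hS fun N => ?_
      refine le_of_tendsto_of_tendsto' (hsl N) (hL _) fun n => ?_
      rw [measure_iUnion hd hf]
      exact ENNReal.sum_le_tsum _
  refine ⟨Measure.ofMeasurable (fun A _ => L A) h0 hadd, ?_, ?_⟩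
  · refine Measure.le_iff.2 fun s hs => ?_
    rw [Measure.ofMeasurable_apply s hs]
    exact le_of_tendsto' (hL s) fun n => hle n s
  · intro A hA
    rw [Measure.ofMeasurable_apply A hA]
    exact hL A

theorem exists_cells {K : Set X} (hK : IsCompact K) {τ : ℝ} (hτ : 0 < τ) :
    ∃ (N : ℕ) (A : ℕ → Set X), (∀ i, MeasurableSet (A i)) ∧ Pairwise (Function.onFun Disjoint A) ∧
      (∀ i, N ≤ i → A i = ∅) ∧ K ⊆ (⋃ i, A i) ∧ ∀ i, ∀ x ∈ A i, ∀ y ∈ A i, dist x y ≤ τ := by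
  obtain ⟨t, _, htf, hcov⟩ := hK.finite_cover_balls (half_pos hτ)
  lift t to Finset X using htf
  let B : ℕ → Set X := fun i =>
    if hi : i < t.card then Metric.ball (t.equivFin.symm ⟨i, hi⟩ : X) (τ / 2) else ∅
  have hB : ∀ i, MeasurableSet (B i) := by
    intro i; simp only [B]; split_ifs
    · exact measurableSet_ball
    · exact .empty
  refine ⟨t.card, disjointed B, fun i => MeasurableSet.disjointed hB i, disjoint_disjointed B, ?_,
    ?_, ?_⟩
  · intro i hi
    refine subset_eq_empty (disjointed_subset B i) ?_
    simp [B, not_lt.2 hi]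
  · rw [iUnion_disjointed]
    refine hcov.trans ?_
    refine iUnion₂_subset fun x hx => ?_
    refine subset_iUnion_of_subset (t.equivFin ⟨x, hx⟩ : ℕ) ?_
    simp [B]
  · intro i x hx y hy
    have hx := disjointed_subset B i hx
    have hy := disjointed_subset B i hy
    by_cases hi : i < t.card
    · simp only [B, hi, dite_true, Metric.mem_ball] at hx hy
      have := dist_triangle_right x y (t.equivFin.symm ⟨i, hi⟩ : X)
      linarith
    · simp [B, hi] at hx

theorem sum_cells {ν : Measure X} [IsFiniteMeasure ν] {A : ℕ → Set X}
    (hA : ∀ i, MeasurableSet (A i)) (hd : Pairwise (Function.onFun Disjoint A))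
    (hc : ν (⋃ i, A i)ᶜ = 0) (p : ℕ → ℕ → ℝ≥0∞) (hp : ∀ i, ∑' j, p i j = ν (A i))
    (e : ℕ ≃ ℕ × ℕ) :
    ν = Measure.sum fun n => (p (e n).1 (e n).2 / ν (A (e n).1)) • ν.restrict (A (e n).1) := by
  ext s hs
  rw [Measure.sum_apply _ hs,
    e.tsum_eq (fun q : ℕ × ℕ => ((p q.1 q.2 / ν (A q.1)) • ν.restrict (A q.1)) s),
    ENNReal.tsum_prod']
  have h1 : ∀ i, ∑' j, ((p i j / ν (A i)) • ν.restrict (A i)) s = ν (s ∩ A i) := by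
    intro i
    simp only [Measure.smul_apply, smul_eq_mul, Measure.restrict_apply hs, div_eq_mul_inv]
    rw [ENNReal.tsum_mul_right, ENNReal.tsum_mul_right, hp]
    by_cases h0 : ν (A i) = 0
    · rw [measure_mono_null inter_subset_right h0]; simp
    · rw [ENNReal.mul_inv_cancel h0 (measure_ne_top _ _), one_mul]
  simp only [h1]
  rw [← measure_iUnion (fun i j hij => (hd hij).mono inter_subset_right inter_subset_right)
    (fun i => hs.inter (hA i)), ← inter_iUnion]
  refine (measure_inter_conull ?_).symm
  exact hc

theorem gamma_of_limit {μ : Measure X} {K : Set X} (hK : IsCompact K) (U : Ultrafilter ℕ)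
    {ν η : Measure X} [IsFiniteMeasure ν] [IsFiniteMeasure η] (hν : ν ∈ MM μ) (hη : η ∈ MM μ)
    (hνK : ν Kᶜ = 0) (hηK : η Kᶜ = 0)
    (νn : ℕ → Measure X) (Ln : ℕ → Kernel X X) (rn : ℕ → ℝ) (δn : ℕ → ℝ≥0∞)
    (hstep : ∀ n, Step (rn n) (δn n) (νn n) (Ln n)) (hδn : Tendsto δn U (nhds 0))
    {r ε : ℝ} (hr0 : 0 ≤ r) (hrε : r < ε) (hrn : ∀ᶠ n in U, rn n ≤ r)
    (hνn : ∀ n, νn n Kᶜ = 0) (hηn : ∀ n, (νn n).bind (Ln n) Kᶜ = 0)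
    (hl1 : ∀ A, MeasurableSet A → Tendsto (fun n => νn n A) U (nhds (ν A)))
    (hl2 : ∀ A, MeasurableSet A → Tendsto (fun n => (νn n).bind (Ln n) A) U (nhds (η A)))
    {δ : ℝ} (hδ : 0 ≤ δ) : GammaDecomp μ ε δ ν η := by
  set τ := (ε - r) / 2 with hτ
  have hτ0 : 0 < τ := by rw [hτ]; linarith
  obtain ⟨N, A, hA, hd, hN, hcov, hdiam⟩ := exists_cells hK hτ0
  have hcc : (⋃ i, A i)ᶜ ⊆ Kᶜ := compl_subset_compl.2 hcov
  let m : ℕ → ℕ → ℕ → ℝ≥0∞ := fun n i j => ((νn n).restrict (A i)).bind (Ln n) (A j)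
  let M : ℕ → ℕ → ℝ≥0∞ := fun i j => (U.map (fun n => m n i j)).lim
  have hM : ∀ i j, Tendsto (fun n => m n i j) U (nhds (M i j)) := fun i j =>
    (U.map (fun n => m n i j)).le_nhds_lim
  have hrow0 : ∀ n i, ∑' j, m n i j = ((νn n).restrict (A i)).bind (Ln n) univ := by
    intro n i
    simp only [m]
    rw [← measure_iUnion hd hA]
    refine measure_congr ?_
    rw [eventuallyEq_univ, mem_ae_iff]
    refine measure_mono_null hcc ?_
    exact le_antisymm ((bind_mono' Measure.restrict_le_self (Ln n) _).trans (hηn n).le) bot_le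
  have hm0 : ∀ n i j, N ≤ j → m n i j = 0 := by
    intro n i j hj; simp only [m, hN j hj, measure_empty]
  have hm0' : ∀ n i j, N ≤ i → m n i j = 0 := by
    intro n i j hj
    simp only [m, hN i hj, Measure.restrict_empty, Measure.bind_zero_left, Measure.coe_zero,
      Pi.zero_apply]
  have hM0 : ∀ i j, N ≤ j → M i j = 0 := by
    intro i j hj
    refine tendsto_nhds_unique (hM i j) ?_
    simp only [hm0 _ i j hj]; exact tendsto_const_nhds
  have hM0' : ∀ i j, N ≤ i → M i j = 0 := by
    intro i j hj
    refine tendsto_nhds_unique (hM i j) ?_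
    simp only [hm0' _ i j hj]; exact tendsto_const_nhds
  have hts : ∀ f : ℕ → ℝ≥0∞, (∀ j, N ≤ j → f j = 0) → ∑' j, f j = ∑ j ∈ Finset.range N, f j := by
    intro f hf
    refine tsum_eq_sum fun j hj => hf j ?_
    simpa using hj
  have hrow : ∀ i, ∑' j, M i j = ν (A i) := by
    intro i
    rw [hts _ (hM0 i)]
    have hlim : Tendsto (fun n => ∑ j ∈ Finset.range N, m n i j) U
        (nhds (∑ j ∈ Finset.range N, M i j)) := tendsto_finsetSum _ fun j _ => hM i j
    have hst : ∀ n, Step (rn n) (δn n) ((νn n).restrict (A i)) (Ln n) := fun n =>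
      (hstep n).mono Measure.restrict_le_self
    apply le_antisymm
    · refine le_of_tendsto_of_tendsto' hlim (hl1 _ (hA i)) fun n => ?_
      rw [← hts _ (hm0 n i), hrow0]
      simpa using (hst n).bind_mass_le
    · have := hlim.add hδn
      rw [add_zero] at this
      refine le_of_tendsto_of_tendsto' (hl1 _ (hA i)) this fun n => ?_
      rw [← hts _ (hm0 n i), hrow0]
      simpa using (hst n).mass_le
  have hcol : ∀ j, ∑' i, M i j = η (A j) := by
    intro j
    rw [hts _ fun i hi => hM0' i j hi]
    have hlim : Tendsto (fun n => ∑ i ∈ Finset.range N, m n i j) U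
        (nhds (∑ i ∈ Finset.range N, M i j)) := tendsto_finsetSum _ fun i _ => hM i j
    refine tendsto_nhds_unique hlim ((hl2 _ (hA j)).congr fun n => ?_)
    rw [← hts _ fun i hi => hm0' n i j hi]
    simp only [m, Measure.bind_apply (hA j) (Ln n).measurable.aemeasurable]
    rw [← lintegral_iUnion hA hd, Measure.restrict_eq_self_of_ae_mem]
    rw [ae_iff]
    exact measure_mono_null hcc (hνn n)
  have hMle1 : ∀ i j, M i j ≤ ν (A i) := fun i j => (ENNReal.le_tsum j).trans (hrow i).le
  have hMle2 : ∀ i j, M i j ≤ η (A j) := fun i j =>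
    (ENNReal.le_tsum (f := fun i => M i j) i).trans (hcol j).le
  have hnear : ∀ i j, M i j ≠ 0 → ∃ x ∈ A i, ∃ y ∈ A j, dist x y ≤ r := by
    intro i j hij
    by_contra! hcon
    refine hij (tendsto_nhds_unique (hM i j) ?_)
    refine tendsto_const_nhds.congr' ?_
    filter_upwards [hrn] with n hn
    simp only [m, Measure.bind_apply (hA j) (Ln n).measurable.aemeasurable]
    symm
    rw [setLIntegral_congr_fun (g := fun _ => 0) (hA i)]
    · simp
    · intro x hx
      refine measure_mono_null ?_ ((hstep n).range x)
      intro y hy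
      exact hn.trans_lt (hcon x hx y hy)
  let e : ℕ ≃ ℕ × ℕ := Nat.pairEquiv.symm
  let e' : ℕ ≃ ℕ × ℕ := e.trans (Equiv.prodComm ℕ ℕ)
  have hmul : ∀ (a q : ℝ≥0∞), q ≤ a → a ≠ ∞ → q / a * a = q := by
    intro a q hq ha
    by_cases h0 : a = 0
    · have : q = 0 := by simpa [h0] using hq
      simp [this]
    · exact ENNReal.div_mul_cancel h0 ha
  have hle1 : ∀ (ν : Measure X) (B : Set X) (q : ℝ≥0∞), q ≤ ν B →
      (q / ν B) • ν.restrict B ≤ ν := by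
    intro ν B q hq
    refine Measure.le_iff.2 fun s hs => ?_
    rw [Measure.smul_apply, smul_eq_mul]
    refine (mul_le_of_le_one_left' (ENNReal.div_le_of_le_mul (by simpa using hq))).trans ?_
    exact Measure.restrict_le_self s
  have hsupp : ∀ (ν : Measure X) (i : ℕ) (q : ℝ≥0∞), ∀ x ∈ msupp (q • ν.restrict (A i)),
      x ∈ closure (A i) ∧ q ≠ 0 := by
    intro ν i q x hx
    constructor
    · refine msupp_subset_of_null isClosed_closure ?_ hx
      rw [Measure.smul_apply, smul_eq_mul, Measure.restrict_apply isClosed_closure.measurableSet.compl]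
      have : (closure (A i))ᶜ ∩ A i = ∅ := by
        rw [← disjoint_iff_inter_eq_empty]
        exact disjoint_compl_left.mono_right subset_closure
      simp [this]
    · rintro rfl
      simpa using hx 1 one_pos
  have hcl : ∀ i, ∀ x ∈ closure (A i), ∀ y ∈ closure (A i), dist x y ≤ τ := by
    intro i x hx y hy
    have hAd : Metric.diam (closure (A i)) ≤ τ := by
      rw [Metric.diam_closure]
      exact Metric.diam_le_of_forall_dist_le hτ0.le (hdiam i)
    refine (Metric.dist_le_diam_of_mem ?_ hx hy).trans hAd
    exact (Metric.isBounded_iff.2 ⟨τ, fun x hx y hy => hdiam i x hx y hy⟩).closure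
  refine ⟨_, _, ?_, ?_, sum_cells hA hd (measure_mono_null hcc hνK) M hrow e,
    sum_cells hA hd (measure_mono_null hcc hηK) (fun j i => M i j) hcol e', ⟨0, ?_, hδ⟩, ?_⟩
  · intro n
    exact mem_MM_of_le hν (hle1 _ _ _ (hMle1 _ _))
  · intro n
    exact mem_MM_of_le hη (hle1 _ _ _ (hMle2 _ _))
  · convert hasSum_zero using 2 with n
    simp only [mass, Measure.smul_apply, smul_eq_mul, Measure.restrict_apply_univ, abs_eq_zero]
    rw [hmul _ _ (hMle1 _ _) (measure_ne_top _ _), hmul _ _ (hMle2 _ _) (measure_ne_top _ _)]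
    exact sub_self _
  · intro n
    have hε0 : 0 ≤ ε := by linarith
    refine Metric.diam_le_of_forall_dist_le hε0 ?_
    have hMne1 : ∀ i j : ℕ, M i j / ν (A i) ≠ 0 → M i j ≠ 0 := by
      intro i j hq h0; simp [h0] at hq
    have hMne2 : ∀ i j : ℕ, M i j / η (A j) ≠ 0 → M i j ≠ 0 := by
      intro i j hq h0; simp [h0] at hq
    have cross : ∀ x ∈ closure (A (e n).1), ∀ y ∈ closure (A (e n).2), M (e n).1 (e n).2 ≠ 0 →
        dist x y ≤ ε := by
      intro x hx y hy h0
      obtain ⟨a, ha, b, hb, hab⟩ := hnear _ _ h0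
      have t1 := hcl _ x hx a (subset_closure ha)
      have t2 := hcl _ b (subset_closure hb) y hy
      have := dist_triangle4 x a b y
      linarith
    rintro x (hx | hx) y (hy | hy)
    · refine (hcl _ x (hsupp _ _ _ x hx).1 y (hsupp _ _ _ y hy).1).trans ?_
      linarith
    · exact cross x (hsupp _ _ _ x hx).1 y (hsupp _ _ _ y hy).1 (hMne1 _ _ (hsupp _ _ _ x hx).2)
    · rw [dist_comm]
      exact cross y (hsupp _ _ _ y hy).1 x (hsupp _ _ _ x hx).1 (hMne1 _ _ (hsupp _ _ _ y hy).2)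
    · refine (hcl _ x (hsupp _ _ _ x hx).1 y (hsupp _ _ _ y hy).1).trans ?_
      linarith


theorem le_restrict_of_null {μ ν : Measure X} {K : Set X} (hK : MeasurableSet K) (hle : ν ≤ μ)
    (h0 : ν Kᶜ = 0) : ν ≤ μ.restrict K := by
  refine Measure.le_iff.2 fun s hs => ?_
  rw [Measure.restrict_apply hs, ← measure_inter_conull (s := s) h0]
  exact hle _

theorem exists_split {h : ℝ → ℝ} (hh : IsGauge h) {μ : Measure X} [IsFiniteMeasureOnCompacts μ]
    {b : ℝ} (hb : 0 < b) {γ : ℝ → Measure X} (hγ : IsCurveM h μ b γ) {K : Set X}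
    (hK : IsCompact K) (hγK : ∀ t ∈ Icc (0:ℝ) b, γ t Kᶜ = 0) {θ : Measure X} (hθ : θ ≤ γ 0) :
    ∃ γ' : ℝ → Measure X, IsCurveM h μ b γ' ∧ γ' 0 = θ ∧ γ' b ≤ γ b ∧
      ∀ t ∈ Icc (0:ℝ) b, γ' t Kᶜ = 0 := by
  have hKm : MeasurableSet K := hK.isClosed.measurableSet
  have hfinK : IsFiniteMeasure (μ.restrict K) := ⟨by
    rw [Measure.restrict_apply_univ]; exact hK.measure_lt_top⟩
  let p : ℕ → ℕ → ℝ := fun n j => j * (b / ((n : ℝ) + 1))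
  have hp : ∀ n j, j ≤ n + 1 → p n j ∈ Icc (0:ℝ) b := by
    intro n j hj
    refine ⟨by positivity, ?_⟩
    have hj' : (j : ℝ) ≤ n + 1 := by exact_mod_cast hj
    calc p n j ≤ ((n : ℝ) + 1) * (b / ((n : ℝ) + 1)) := by simp only [p]; gcongr
      _ = b := by field_simp
  let ρ : ℕ → ℝ := fun n => b / ((n : ℝ) + 1) * (1 + 1 / ((n : ℝ) + 1))
  have hρ0 : ∀ n, 0 ≤ ρ n := fun n => by positivity
  let d : ℕ → ℝ := fun n => 1 / ((n : ℝ) + 1) ^ 2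
  have hex : ∀ n j, ∃ κ : Kernel X X, j + 1 ≤ n + 1 →
      Step (ρ n) (ENNReal.ofReal (d n)) (γ (p n j)) κ ∧ (γ (p n j)).bind κ ≤ γ (p n (j + 1)) := by
    intro n j
    by_cases hj : j + 1 ≤ n + 1
    · have h1 := hp n j (by omega)
      have h2 := hp n (j + 1) hj
      have hdiff : p n (j + 1) - p n j = b / ((n : ℝ) + 1) := by
        simp only [p]; push_cast; ring
      have hpos : 0 < b / ((n : ℝ) + 1) := by positivity
      obtain ⟨κ, hκ⟩ := curve_WW hh hγ h1.1 (by linarith) h2.2 (r := ρ n) (by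
        rw [hdiff]
        simp only [ρ]
        have : 0 < b / ((n : ℝ) + 1) * (1 / ((n : ℝ) + 1)) := by positivity
        linarith) (ENNReal.ofReal (d n)) (by simp only [d, ENNReal.ofReal_pos]; positivity)
      exact ⟨κ, fun _ => hκ⟩
    · exact ⟨Kernel.id, fun hc => absurd hc hj⟩
  choose κ hκ using hex
  let T : ℕ → ℕ → Measure X := fun n j => Nat.rec θ (fun j ν => ν.bind (κ n j)) j
  have hT0 : ∀ n, T n 0 = θ := fun n => rfl
  have hTs : ∀ n j, T n (j + 1) = (T n j).bind (κ n j) := fun n j => rfl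
  have hT : ∀ n j, j ≤ n + 1 → T n j ≤ γ (p n j) := by
    intro n j
    induction j with
    | zero => intro _; rw [hT0]; simpa [p] using hθ
    | succ j ih =>
      intro hj
      rw [hTs]
      exact (bind_mono' (ih (by omega)) _).trans (hκ n j hj).2
  have hchain : ∀ n j m : ℕ, j + m ≤ n + 1 → ∃ L : Kernel X X,
      Step (m * ρ n) (m * ENNReal.ofReal (d n)) (T n j) L ∧ (T n j).bind L = T n (j + m) := by
    intro n j m
    induction m with
    | zero =>
      intro _
      refine ⟨Kernel.id, by simpa using Step.id _, ?_⟩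
      exact (Measure.bind_dirac : (T n j).bind Measure.dirac = T n j)
    | succ m ih =>
      intro hm
      obtain ⟨L, hL, hL'⟩ := ih (by omega)
      refine ⟨κ n (j + m) ∘ₖ L, (hL.comp (ε₂ := ρ n) (δ₂ := ENNReal.ofReal (d n)) ?_).weaken
        (le_of_eq (by push_cast; ring)) (le_of_eq (by push_cast; ring)), ?_⟩
      · rw [hL']
        exact (hκ n (j + m) (by omega)).1.mono (hT n _ (by omega))
      · rw [bind_comp', hL', ← hTs]; rfl
  let idx : ℕ → ℝ → ℕ := fun n t => ⌊t / b * ((n : ℝ) + 1)⌋₊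
  have hidx : ∀ n, ∀ t ∈ Icc (0:ℝ) b, idx n t ≤ n + 1 := by
    intro n t ht
    refine Nat.floor_le_of_le ?_
    push_cast
    have : t / b ≤ 1 := (div_le_one hb).2 ht.2
    nlinarith [Nat.cast_nonneg (α := ℝ) n]
  have hidx0 : ∀ n, idx n 0 = 0 := fun n => by simp [idx]
  have hidxb : ∀ n, idx n b = n + 1 := fun n => by
    simp only [idx, div_self hb.ne', one_mul]
    exact_mod_cast Nat.floor_natCast (n + 1)
  have hidxm : ∀ n s t, s ≤ t → idx n s ≤ idx n t := by
    intro n s t hst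
    refine Nat.floor_le_floor ?_
    gcongr
  let U : Ultrafilter ℕ := hyperfilter ℕ
  have hU : (U : Filter ℕ) ≤ atTop := Nat.hyperfilter_le_atTop
  have hTK : ∀ n, ∀ t ∈ Icc (0:ℝ) b, T n (idx n t) ≤ μ.restrict K := by
    intro n t ht
    have hm := hp n _ (hidx n t ht)
    exact (hT n _ (hidx n t ht)).trans (le_restrict_of_null hKm (hγ.2.1 _ hm).1 (hγK _ hm))
  have hlim : ∀ t, ∃ ν : Measure X, t ∈ Icc (0:ℝ) b → ν ≤ μ.restrict K ∧
      ∀ A, MeasurableSet A → Tendsto (fun n => T n (idx n t) A) U (nhds (ν A)) := by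
    intro t
    by_cases ht : t ∈ Icc (0:ℝ) b
    · obtain ⟨ν, hν⟩ := exists_setwise_lim U (fun n => T n (idx n t)) (μ.restrict K)
        (fun n => hTK n t ht)
      exact ⟨ν, fun _ => hν⟩
    · exact ⟨0, fun hc => absurd hc ht⟩
  choose γ' hγ' using hlim
  have hnull : μ.restrict K Kᶜ = 0 := by rw [Measure.restrict_apply hKm.compl]; simp
  have hγ'K : ∀ t ∈ Icc (0:ℝ) b, γ' t Kᶜ = 0 := fun t ht =>
    le_antisymm (((hγ' t ht).1 _).trans hnull.le) bot_le
  have hTnull : ∀ n, ∀ t ∈ Icc (0:ℝ) b, T n (idx n t) Kᶜ = 0 := fun n t ht =>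
    le_antisymm ((hTK n t ht _).trans hnull.le) bot_le
  have hmem : ∀ t ∈ Icc (0:ℝ) b, γ' t ∈ MM μ := fun t ht =>
    mem_MM_of_compact hK ((hγ' t ht).1.trans Measure.restrict_le_self) (hγ'K t ht)
  have hdist : ∀ s ∈ Icc (0:ℝ) b, ∀ t ∈ Icc (0:ℝ) b, s ≤ t →
      dM h μ (γ' s) (γ' t) ≤ t - s := by
    intro s hs t ht hst
    refine le_of_forall_gt_imp_ge_of_dense fun ε hε => ?_
    have hε0 : 0 < ε := by linarith
    refine csInf_le ⟨0, fun x hx => hx.1.le⟩ ⟨hε0, ?_⟩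
    have hL : ∀ n, ∃ L : Kernel X X,
        Step (((idx n t - idx n s : ℕ) : ℝ) * ρ n) (ENNReal.ofReal (1 / ((n : ℝ) + 1)))
          (T n (idx n s)) L ∧ (T n (idx n s)).bind L = T n (idx n t) := by
      intro n
      have h1 := hidxm n s t hst
      have h2 := hidx n t ht
      obtain ⟨L, hL1, hL2⟩ := hchain n (idx n s) (idx n t - idx n s) (by omega)
      refine ⟨L, hL1.weaken le_rfl ?_, ?_⟩
      · rw [← ENNReal.ofReal_natCast, ← ENNReal.ofReal_mul (by positivity)]
        refine ENNReal.ofReal_le_ofReal ?_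
        have h3 : ((idx n t - idx n s : ℕ) : ℝ) ≤ n + 1 := by
          exact_mod_cast (by omega : idx n t - idx n s ≤ n + 1)
        calc ((idx n t - idx n s : ℕ) : ℝ) * d n ≤ ((n : ℝ) + 1) * d n := by
              gcongr
          _ = 1 / ((n : ℝ) + 1) := by simp only [d]; field_simp
      · rw [hL2]; congr 1; omega
    choose L hL1 hL2 using hL
    have hfs := isFinite_of_mem_MM (hmem s hs)
    have hft := isFinite_of_mem_MM (hmem t ht)
    have hinv : Tendsto (fun n : ℕ => 1 / ((n : ℝ) + 1)) atTop (nhds 0) :=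
      tendsto_one_div_add_atTop_nhds_zero_nat
    refine gamma_of_limit hK U (hmem s hs) (hmem t ht) (hγ'K s hs) (hγ'K t ht)
      (fun n => T n (idx n s)) L _ _ hL1 ?_ (r := (t - s + ε) / 2) (by linarith) (by linarith) ?_
      (fun n => hTnull n s hs) (fun n => by rw [hL2]; exact hTnull n t ht)
      (hγ' s hs).2 (fun A hA => by simp only [hL2]; exact (hγ' t ht).2 A hA) (hh.nonneg hε0.le)
    · have := ENNReal.tendsto_ofReal hinv
      rw [ENNReal.ofReal_zero] at this
      exact this.mono_left hU
    · have hl : Tendsto (fun n : ℕ => (t - s + b * (1 / ((n : ℝ) + 1))) * (1 + 1 / ((n : ℝ) + 1)))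
          atTop (nhds (t - s)) := by
        have := ((hinv.const_mul b).const_add (t - s)).mul (hinv.const_add 1)
        simpa using this
      have hev : ∀ᶠ n : ℕ in atTop,
          (t - s + b * (1 / ((n : ℝ) + 1))) * (1 + 1 / ((n : ℝ) + 1)) < (t - s + ε) / 2 :=
        (tendsto_order.1 hl).2 _ (by linarith)
      filter_upwards [hU hev] with n hn
      refine le_trans ?_ hn.le
      have h1 := hidxm n s t hst
      rw [Nat.cast_sub h1]
      have f1 : (idx n t : ℝ) ≤ t / b * ((n : ℝ) + 1) :=
        Nat.floor_le (mul_nonneg (div_nonneg ht.1 hb.le) (by positivity))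
      have f2 : s / b * ((n : ℝ) + 1) < idx n s + 1 := Nat.lt_floor_add_one _
      calc ((idx n t : ℝ) - idx n s) * ρ n ≤ ((t - s) / b * ((n : ℝ) + 1) + 1) * ρ n := by
            refine mul_le_mul_of_nonneg_right ?_ (hρ0 n)
            have : (t - s) / b * ((n : ℝ) + 1) =
              t / b * ((n : ℝ) + 1) - s / b * ((n : ℝ) + 1) := by ring
            linarith
        _ = (t - s + b * (1 / ((n : ℝ) + 1))) * (1 + 1 / ((n : ℝ) + 1)) := by
            simp only [ρ]; field_simp
  refine ⟨γ', ⟨hb.le, hmem, fun s hs t ht => ?_⟩, ?_, ?_, hγ'K⟩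
  · rcases le_total s t with hst | hst
    · rw [abs_sub_comm, abs_of_nonneg (by linarith)]; exact hdist s hs t ht hst
    · rw [dM_comm, abs_of_nonneg (by linarith)]; exact hdist t ht s hs hst
  · ext A hA
    refine tendsto_nhds_unique ((hγ' 0 ⟨le_rfl, hb.le⟩).2 A hA) ?_
    simp only [hidx0, hT0]
    exact tendsto_const_nhds
  · refine Measure.le_iff.2 fun A hA => ?_
    refine le_of_tendsto' ((hγ' b ⟨hb.le, le_rfl⟩).2 A hA) fun n => ?_
    rw [hidxb]
    have := hT n (n + 1) le_rfl A
    have e : p n (n + 1) = b := by simp only [p]; push_cast; field_simp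
    rwa [e] at this

theorem WW.lintegral_le {r : ℝ} {ν η : Measure X} [IsFiniteMeasure ν] (H : WW r ν η)
    (hm : ν univ = η univ) {ψ : X → ℝ≥0∞} (hψ : Measurable ψ) {C ω : ℝ≥0∞} (hC : C ≠ ∞)
    (hψC : ∀ x, ψ x ≤ C) (hω : ∀ x y, dist x y ≤ r → ψ y ≤ ψ x + ω) :
    ∫⁻ x, ψ x ∂η ≤ ∫⁻ x, ψ x ∂ν + ω * ν univ := by
  refine ENNReal.le_of_forall_pos_le_add fun ε hε _ => ?_
  have hδ : (0 : ℝ≥0∞) < ε / (C + 1) :=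
    ENNReal.div_pos (by simpa using hε.ne') (by simp [hC])
  obtain ⟨κ, hκ, hle⟩ := H _ hδ
  have hfb : IsFiniteMeasure (ν.bind κ) := ⟨hκ.bind_mass_le.trans_lt (measure_lt_top _ _)⟩
  have hdiff : (η - ν.bind κ) univ ≤ ε / (C + 1) := by
    rw [Measure.sub_apply .univ hle, tsub_le_iff_left, ← hm]
    exact hκ.mass_le
  have h1 : ∫⁻ x, ψ x ∂(ν.bind κ) ≤ ∫⁻ x, ψ x ∂ν + ω * ν univ := by
    rw [Measure.lintegral_bind κ.measurable.aemeasurable hψ.aemeasurable]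
    calc ∫⁻ x, ∫⁻ y, ψ y ∂(κ x) ∂ν ≤ ∫⁻ x, (ψ x + ω) ∂ν := by
          refine lintegral_mono fun x => ?_
          have hae : ∀ᵐ y ∂(κ x), ψ y ≤ ψ x + ω := by
            have h1 : ∀ᵐ y ∂(κ x), ¬ (r < dist x y) := by
              rw [ae_iff]; simpa using hκ.range x
            filter_upwards [h1] with y hy using hω x y (not_lt.1 hy)
          calc ∫⁻ y, ψ y ∂(κ x) ≤ ∫⁻ y, (ψ x + ω) ∂(κ x) := lintegral_mono_ae hae
            _ = (ψ x + ω) * κ x univ := by simp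
            _ ≤ ψ x + ω := mul_le_of_le_one_right' (hκ.sub x)
      _ = _ := by rw [lintegral_add_left hψ]; simp
  calc ∫⁻ x, ψ x ∂η = ∫⁻ x, ψ x ∂(η - ν.bind κ) + ∫⁻ x, ψ x ∂(ν.bind κ) := by
        rw [← lintegral_add_measure, Measure.sub_add_cancel_of_le hle]
    _ ≤ C * (η - ν.bind κ) univ + (∫⁻ x, ψ x ∂ν + ω * ν univ) := by
        gcongr
        calc ∫⁻ x, ψ x ∂(η - ν.bind κ) ≤ ∫⁻ x, C ∂(η - ν.bind κ) := lintegral_mono hψC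
          _ = _ := by simp
    _ ≤ C * (ε / (C + 1)) + (∫⁻ x, ψ x ∂ν + ω * ν univ) := by gcongr
    _ ≤ ε + (∫⁻ x, ψ x ∂ν + ω * ν univ) := by
        gcongr
        calc C * (ε / (C + 1)) ≤ (C + 1) * (ε / (C + 1)) := by gcongr; exact le_self_add
          _ = ε := ENNReal.mul_div_cancel (by simp) (by simp [hC])
    _ = _ := add_comm _ _

theorem WW.integral_le {r : ℝ} {ν η : Measure X} [IsFiniteMeasure ν] [IsFiniteMeasure η]
    (H : WW r ν η) (hm : ν univ = η univ) {φ : X → ℝ} (hφ : Continuous φ) {C ω : ℝ}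
    (hω0 : 0 ≤ ω) (h0 : ∀ x, 0 ≤ φ x) (hφC : ∀ x, φ x ≤ C)
    (hω : ∀ x y, dist x y ≤ r → φ y ≤ φ x + ω) :
    ∫ x, φ x ∂η ≤ ∫ x, φ x ∂ν + ω * mass ν := by
  have hint : ∀ (ν : Measure X) [IsFiniteMeasure ν], Integrable φ ν := fun ν _ =>
    Integrable.of_bound hφ.aestronglyMeasurable C (Eventually.of_forall fun x => by
      rw [Real.norm_eq_abs, abs_of_nonneg (h0 x)]; exact hφC x)
  have key := H.lintegral_le hm (ψ := fun x => ENNReal.ofReal (φ x))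
    (C := ENNReal.ofReal C) (ω := ENNReal.ofReal ω) hφ.measurable.ennreal_ofReal
    ENNReal.ofReal_ne_top (fun x => ENNReal.ofReal_le_ofReal (hφC x)) (fun x y hxy => by
      rw [← ENNReal.ofReal_add (h0 x) hω0]
      exact ENNReal.ofReal_le_ofReal (hω x y hxy))
  rw [← ofReal_integral_eq_lintegral_ofReal (hint η) (Eventually.of_forall h0),
    ← ofReal_integral_eq_lintegral_ofReal (hint ν) (Eventually.of_forall h0),
    ← ENNReal.ofReal_toReal (measure_ne_top ν univ), ← ENNReal.ofReal_mul hω0,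
    ← ENNReal.ofReal_add (integral_nonneg h0) (mul_nonneg hω0 ENNReal.toReal_nonneg)] at key
  exact (ENNReal.ofReal_le_ofReal_iff
    (add_nonneg (integral_nonneg h0) (mul_nonneg hω0 ENNReal.toReal_nonneg))).1 key

theorem WW.abs_integral_le {r : ℝ} {ν η : Measure X} [IsFiniteMeasure ν] [IsFiniteMeasure η]
    (H : WW r ν η) (hm : ν univ = η univ) {φ : X → ℝ} (hφ : Continuous φ) {C ω : ℝ}
    (hω0 : 0 ≤ ω) (hφC : ∀ x, |φ x| ≤ C)
    (hω : ∀ x y, dist x y ≤ r → |φ y - φ x| ≤ ω) :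
    |∫ x, φ x ∂η - ∫ x, φ x ∂ν| ≤ ω * mass ν := by
  have hint : ∀ (ν : Measure X) [IsFiniteMeasure ν], Integrable φ ν := fun ν _ =>
    Integrable.of_bound hφ.aestronglyMeasurable C (Eventually.of_forall hφC)
  have hreal : ν.real univ = η.real univ := by simp [Measure.real, hm]
  have k1 := H.integral_le hm (φ := fun x => φ x + C) (hφ.add continuous_const) (C := C + C)
    (ω := ω) hω0 (fun x => by linarith [(abs_le.1 (hφC x)).1])
    (fun x => by linarith [(abs_le.1 (hφC x)).2])
    (fun x y hxy => by linarith [(abs_le.1 (hω x y hxy)).2])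
  have k2 := H.integral_le hm (φ := fun x => C - φ x) (continuous_const.sub hφ) (C := C + C)
    (ω := ω) hω0 (fun x => by linarith [(abs_le.1 (hφC x)).2])
    (fun x => by linarith [(abs_le.1 (hφC x)).1])
    (fun x y hxy => by linarith [(abs_le.1 (hω x y hxy)).1])
  rw [integral_add (hint η) (integrable_const _), integral_add (hint ν) (integrable_const _)] at k1
  rw [integral_sub (integrable_const _) (hint η), integral_sub (integrable_const _) (hint ν)] at k2
  simp only [integral_const, smul_eq_mul, hreal] at k1 k2
  rw [abs_le]
  constructor <;> linarith

theorem integrable_of_le {μ ν : Measure X} {K : Set X} (hK : IsCompact K) {w : X → ℝ}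
    (hw : LocallyIntegrable w μ) (hle : ν ≤ μ) (h0 : ν Kᶜ = 0) : Integrable w ν :=
  Integrable.mono_measure (hw.integrableOn_isCompact hK)
    (le_restrict_of_null hK.isClosed.measurableSet hle h0)

theorem modulus [LocallyCompactSpace X] {μ : Measure X} [IsFiniteMeasureOnCompacts μ]
    {K : Set X} (hK : IsCompact K) {w : X → ℝ} (hw : LocallyIntegrable w μ) {ε : ℝ} (hε : 0 < ε) :
    ∃ s₀ > 0, ∀ ν η : Measure X, ν ≤ μ → η ≤ μ → ν Kᶜ = 0 → η Kᶜ = 0 → ν univ = η univ →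
      ∀ r < s₀, WW r ν η → |∫ x, w x ∂η - ∫ x, w x ∂ν| ≤ ε := by
  have hKm : MeasurableSet K := hK.isClosed.measurableSet
  have hfinK : IsFiniteMeasure (μ.restrict K) := ⟨by
    rw [Measure.restrict_apply_univ]; exact hK.measure_lt_top⟩
  have hwK : Integrable w (μ.restrict K) := hw.integrableOn_isCompact hK
  obtain ⟨φ, hφs, hφi, hφc, hφint⟩ :=
    hwK.exists_hasCompactSupport_integral_sub_le (ε := ε / 3) (by positivity)
  obtain ⟨C, hC⟩ := hφs.exists_bound_of_continuous hφc
  set V := (μ.restrict K).real univ with hV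
  have hV0 : 0 ≤ V := measureReal_nonneg
  obtain ⟨s₀, hs₀, hu⟩ := Metric.uniformContinuous_iff.1
    (hφs.uniformContinuous_of_continuous hφc) (ε / 3 / (V + 1)) (by positivity)
  refine ⟨s₀, hs₀, fun ν η hν hη hνK hηK hm r hr H => ?_⟩
  have hν' := le_restrict_of_null hKm hν hνK
  have hη' := le_restrict_of_null hKm hη hηK
  have hfν : IsFiniteMeasure ν := isFiniteMeasure_of_le _ hν'
  have hfη : IsFiniteMeasure η := isFiniteMeasure_of_le _ hη'
  have hap : ∀ ν : Measure X, ν ≤ μ.restrict K → |∫ x, w x ∂ν - ∫ x, φ x ∂ν| ≤ ε / 3 := by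
    intro ν hle
    rw [← integral_sub (hwK.mono_measure hle) (hφint.mono_measure hle)]
    refine (norm_integral_le_integral_norm (fun x => w x - φ x)).trans (le_trans ?_ hφi)
    exact integral_mono_measure hle (Eventually.of_forall fun x => norm_nonneg _)
      (hwK.sub hφint).norm
  have h1 := hap ν hν'
  have h2 := hap η hη'
  have h3 := H.abs_integral_le hm hφc (C := C) (ω := ε / 3 / (V + 1)) (by positivity) hC
    (fun x y hxy => by
      have := hu (lt_of_le_of_lt hxy hr)
      rw [dist_comm, Real.dist_eq] at this
      exact this.le)
  have h4 : mass ν ≤ V := by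
    refine ENNReal.toReal_mono (measure_ne_top _ _) (hν' _)
  have h5 : ε / 3 / (V + 1) * mass ν ≤ ε / 3 := by
    calc ε / 3 / (V + 1) * mass ν ≤ ε / 3 / (V + 1) * (V + 1) := by gcongr; linarith
      _ = ε / 3 := by field_simp
  rw [abs_le] at h1 h2 h3 ⊢
  constructor <;> linarith [h1.1, h1.2, h2.1, h2.2, h3.1, h3.2]


theorem support_null {h : ℝ → ℝ} (hh : IsGauge h) {μ : Measure X} [IsFiniteMeasureOnCompacts μ]
    {b : ℝ} {γ : ℝ → Measure X} (hγ : IsCurveM h μ b γ) {ρ : ℝ} (hb : b < ρ) :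
    ∀ t ∈ Icc (0:ℝ) b, γ t (Metric.cthickening ρ (msupp (γ 0)))ᶜ = 0 := by
  intro t ht
  set K := Metric.cthickening ρ (msupp (γ 0)) with hKdef
  have hKm : MeasurableSet K := Metric.isClosed_cthickening.measurableSet
  have hfin : IsFiniteMeasure (γ 0) := isFinite_of_mem_MM (hγ.2.1 0 ⟨le_rfl, hγ.1⟩)
  refine le_antisymm (ENNReal.le_of_forall_pos_le_add fun δ hδ _ => ?_) bot_le
  obtain ⟨κ, hκ, hle⟩ := curve_WW hh hγ le_rfl ht.1 ht.2 (r := ρ) (by linarith [ht.2]) δ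
    (by exact_mod_cast hδ)
  have hfb : IsFiniteMeasure ((γ 0).bind κ) := ⟨hκ.bind_mass_le.trans_lt (measure_lt_top _ _)⟩
  have h0 : ((γ 0).bind κ) Kᶜ = 0 := by
    rw [Measure.bind_apply hKm.compl κ.measurable.aemeasurable,
      lintegral_eq_zero_iff (κ.measurable_coe hKm.compl)]
    have hae : ∀ᵐ x ∂(γ 0), x ∈ msupp (γ 0) := measure_msupp_compl _
    filter_upwards [hae] with x hx
    refine measure_mono_null (fun y hy => ?_) (hκ.range x)
    by_contra hc
    refine hy (Metric.mem_cthickening_of_dist_le y x ρ _ hx ?_)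
    rw [dist_comm]
    exact not_lt.1 hc
  have hsub : (γ t - (γ 0).bind κ) univ ≤ δ := by
    rw [Measure.sub_apply .univ hle, tsub_le_iff_left, curve_mass hh hγ ht.1 ht.2]
    exact hκ.mass_le
  calc γ t Kᶜ = (γ t - (γ 0).bind κ + (γ 0).bind κ) Kᶜ := by
        rw [Measure.sub_add_cancel_of_le hle]
    _ = (γ t - (γ 0).bind κ) Kᶜ := by rw [Measure.add_apply, h0, add_zero]
    _ ≤ (γ t - (γ 0).bind κ) univ := measure_mono (subset_univ _)
    _ ≤ 0 + δ := by rw [zero_add]; exact hsub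

theorem IsCurveM.initial {h : ℝ → ℝ} {μ : Measure X} {b : ℝ} {γ : ℝ → Measure X}
    (hγ : IsCurveM h μ b γ) {s : ℝ} (hs : 0 ≤ s) (hsb : s ≤ b) : IsCurveM h μ s γ :=
  ⟨hs, fun t ht => hγ.2.1 t ⟨ht.1, ht.2.trans hsb⟩, fun u hu t ht =>
    hγ.2.2 u ⟨hu.1, hu.2.trans hsb⟩ t ⟨ht.1, ht.2.trans hsb⟩⟩

theorem IsCurveX.shift {h : ℝ → ℝ} {μ : Measure X} {b : ℝ} {γ : ℝ → Measure X}
    (hγ : IsCurveX h μ b γ) {x : ℝ} (hx : 0 ≤ x) (hxb : x ≤ b) :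
    IsCurveX h μ (b - x) (fun t => γ (x + t)) := by
  have hm : ∀ t ∈ Icc (0:ℝ) (b - x), x + t ∈ Icc (0:ℝ) b := fun t ht =>
    ⟨by linarith [ht.1], by linarith [ht.2]⟩
  refine ⟨⟨by linarith, fun t ht => hγ.1.2.1 _ (hm t ht), fun s hs t ht => ?_⟩,
    fun t ht => hγ.2 _ (hm t ht)⟩
  refine (hγ.1.2.2 _ (hm s hs) _ (hm t ht)).trans (le_of_eq ?_)
  congr 1; ring

theorem exists_of_rGrad_lt {h : ℝ → ℝ} {μ : Measure X} {F : Measure X → ℝ} {η : Measure X}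
    {a : ℝ≥0∞} (H : rGrad h μ F η < a) : ∃ ε > 0, ∀ (b : ℝ) (γ : ℝ → Measure X) (s : ℝ),
      IsCurveX h μ b γ → γ 0 = η → 0 < s → s < ε → s < b →
        ENNReal.ofReal (|F (γ s) - F η| / s) < a := by
  simp only [rGrad, iInf_lt_iff] at H
  obtain ⟨ε, hε, H⟩ := H
  exact ⟨ε, hε, fun b γ s h1 h2 h3 h4 h5 =>
    lt_of_le_of_lt (b := rGradE h μ F ε η) (le_sSup ⟨b, γ, s, h1, h2, h3, h4, h5, rfl⟩) H⟩

theorem rGrad_le {h : ℝ → ℝ} {μ : Measure X} {F : Measure X → ℝ} {η : Measure X}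
    {a : ℝ≥0∞} {ε : ℝ} (hε : 0 < ε) (H : ∀ (b : ℝ) (γ : ℝ → Measure X) (s : ℝ),
      IsCurveX h μ b γ → γ 0 = η → 0 < s → s < ε → s < b →
        ENNReal.ofReal (|F (γ s) - F η| / s) ≤ a) : rGrad h μ F η ≤ a := by
  refine (iInf₂_le ε hε).trans (sSup_le ?_)
  rintro r ⟨b, γ, s, h1, h2, h3, h4, h5, rfl⟩
  exact H b γ s h1 h2 h3 h4 h5

theorem rGrad_add {h : ℝ → ℝ} {μ : Measure X} {F F₁ F₂ : Measure X → ℝ} {c : ℝ}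
    (hF : ∀ η ∈ MM μ, η ≠ 0 → F η = F₁ η + F₂ η - c) {η : Measure X} :
    rGrad h μ F η ≤ rGrad h μ F₁ η + rGrad h μ F₂ η := by
  refine le_of_forall_gt_imp_ge_of_dense fun a ha => ?_
  obtain ⟨a₁, a₂, h1, h2, h3⟩ : ∃ a₁ a₂, rGrad h μ F₁ η < a₁ ∧ rGrad h μ F₂ η < a₂ ∧
      a₁ + a₂ ≤ a := by
    obtain ⟨d, hd, hda⟩ := ENNReal.lt_iff_exists_add_pos_lt.1 ha
    have t1 : rGrad h μ F₁ η ≠ ∞ := fun hc => by rw [hc, top_add] at ha; exact not_top_lt ha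
    have t2 : rGrad h μ F₂ η ≠ ∞ := fun hc => by rw [hc, add_top] at ha; exact not_top_lt ha
    have hd2 : (d : ℝ≥0∞) / 2 ≠ 0 := by simp [hd.ne']
    refine ⟨_, _, ENNReal.lt_add_right t1 hd2, ENNReal.lt_add_right t2 hd2, le_trans ?_ hda.le⟩
    rw [add_add_add_comm, ENNReal.add_halves]
  obtain ⟨e₁, he₁, H1⟩ := exists_of_rGrad_lt h1
  obtain ⟨e₂, he₂, H2⟩ := exists_of_rGrad_lt h2
  refine rGrad_le (lt_min he₁ he₂) fun b γ s g1 g2 g3 g4 g5 => le_trans ?_ h3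
  have k1 := H1 b γ s g1 g2 g3 (g4.trans_le (min_le_left _ _)) g5
  have k2 := H2 b γ s g1 g2 g3 (g4.trans_le (min_le_right _ _)) g5
  refine le_trans ?_ (add_le_add k1.le k2.le)
  rw [← ENNReal.ofReal_add (by positivity) (by positivity), ← add_div]
  refine ENNReal.ofReal_le_ofReal ?_
  gcongr
  have m0 : (0:ℝ) ∈ Icc (0:ℝ) b := ⟨le_rfl, g1.1.1⟩
  have ms : s ∈ Icc (0:ℝ) b := ⟨g3.le, g5.le⟩
  subst g2
  rw [hF _ (g1.1.2.1 _ m0) (g1.2 _ m0), hF _ (g1.1.2.1 _ ms) (g1.2 _ ms)]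
  calc _ = |(F₁ (γ s) - F₁ (γ 0)) + (F₂ (γ s) - F₂ (γ 0))| := by congr 1; ring
    _ ≤ _ := abs_add_le _ _

theorem curve_modulus [LocallyCompactSpace X] {h : ℝ → ℝ} (hh : IsGauge h) {μ : Measure X}
    [IsFiniteMeasureOnCompacts μ] {K : Set X} (hK : IsCompact K) {w : X → ℝ}
    (hw : LocallyIntegrable w μ) {ε : ℝ} (hε : 0 < ε) :
    ∃ s₀ > 0, ∀ (b : ℝ) (γ : ℝ → Measure X), IsCurveM h μ b γ →
      (∀ t ∈ Icc (0:ℝ) b, γ t Kᶜ = 0) → ∀ s ∈ Icc (0:ℝ) b, ∀ t ∈ Icc (0:ℝ) b, |s - t| < s₀ →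
        |∫ x, w x ∂(γ s) - ∫ x, w x ∂(γ t)| ≤ ε := by
  obtain ⟨s₀, hs₀, H⟩ := modulus hK hw hε
  refine ⟨s₀, hs₀, fun b γ hγ hγK => ?_⟩
  have key : ∀ s ∈ Icc (0:ℝ) b, ∀ t ∈ Icc (0:ℝ) b, s ≤ t → t - s < s₀ →
        |∫ x, w x ∂(γ t) - ∫ x, w x ∂(γ s)| ≤ ε := by
    intro s hs t ht hst hlt
    obtain ⟨r, hr1, hr2⟩ := exists_between hlt
    exact H (γ s) (γ t) (hγ.2.1 s hs).1 (hγ.2.1 t ht).1 (hγK s hs) (hγK t ht)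
      ((curve_mass hh hγ hs.1 hs.2).trans (curve_mass hh hγ ht.1 ht.2).symm) r hr2
      (curve_WW hh hγ hs.1 hst ht.2 hr1)
  intro s hs t ht hlt
  rcases le_total s t with hst | hst
  · rw [abs_sub_comm]
    exact key s hs t ht hst (by rwa [abs_sub_comm, abs_of_nonneg (by linarith)] at hlt)
  · exact key t ht s hs hst (by rwa [abs_of_nonneg (by linarith)] at hlt)

theorem real_mean_value {u : ℝ → ℝ} {b M : ℝ} (hb : 0 ≤ b) (hu : ContinuousOn u (Icc 0 b))
    (H : ∀ x ∈ Ico (0:ℝ) b, ∀ r, M < r → ∀ᶠ z in nhdsWithin x (Ioi x), |u z - u x| / (z - x) < r) :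
    |u b - u 0| ≤ M * b := by
  have key : ∀ v : ℝ → ℝ, ContinuousOn v (Icc 0 b) →
      (∀ x ∈ Ico (0:ℝ) b, ∀ r, M < r →
        ∀ᶠ z in nhdsWithin x (Ioi x), |v z - v x| / (z - x) < r) → v b ≤ v 0 + M * b := by
    intro v hv Hv
    have := image_le_of_liminf_slope_right_le_deriv_boundary (f := v) (a := 0) (b := b) hv
      (B := fun x => v 0 + M * x) (B' := fun _ => M) (by simp) (by fun_prop)
      (fun x _ => by
        have := (((hasDerivAt_id x).const_mul M).const_add (v 0)).hasDerivWithinAt (s := Ici x)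
        simpa using this)
      (fun x hx r hr => by
        refine Eventually.frequently ?_
        filter_upwards [Hv x hx r hr, self_mem_nhdsWithin] with z hz hz'
        have hz0 : 0 < z - x := sub_pos.2 hz'
        refine lt_of_le_of_lt ?_ hz
        rw [slope_def_field]
        gcongr
        exact le_abs_self _)
    exact this ⟨hb, le_rfl⟩
  have h1 := key u hu H
  have h2 := key (fun x => - u x) hu.neg (fun x hx r hr => by
    filter_upwards [H x hx r hr] with z hz
    rwa [neg_sub_neg, abs_sub_comm])
  rw [abs_le]
  constructor <;> linarith

theorem mass_pos {μ : Measure X} [IsFiniteMeasureOnCompacts μ] {η : Measure X} (hη : η ∈ MM μ)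
    (h0 : η ≠ 0) : 0 < mass η := by
  have := isFinite_of_mem_MM hη
  exact ENNReal.toReal_pos (by simpa using h0) (measure_ne_top _ _)

theorem curve_mean_value [LocallyCompactSpace X] {h : ℝ → ℝ} (hh : IsGauge h) {μ : Measure X}
    [IsFiniteMeasureOnCompacts μ] {K : Set X} (hK : IsCompact K) {k g : X → ℝ}
    (hk : LocallyIntegrable k μ)
    (hgrad : ∀ η ∈ MM μ, η ≠ 0 → rGrad h μ (FfM k) η = ENNReal.ofReal (FfM g η))
    {b : ℝ} {γ : ℝ → Measure X} (hγ : IsCurveX h μ b γ) (hγK : ∀ t ∈ Icc (0:ℝ) b, γ t Kᶜ = 0)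
    {M : ℝ} (hM0 : 0 ≤ M) (hM : ∀ t ∈ Icc (0:ℝ) b, FfM g (γ t) ≤ M) :
    |FfM k (γ b) - FfM k (γ 0)| ≤ M * b := by
  have hmass : ∀ t ∈ Icc (0:ℝ) b, mass (γ t) = mass (γ 0) := fun t ht => by
    simp only [mass, curve_mass hh hγ.1 ht.1 ht.2]
  refine real_mean_value (u := fun t => FfM k (γ t)) hγ.1.1 ?_ fun x hx r hr => ?_
  · have hc : ContinuousOn (fun t => ∫ x, k x ∂(γ t)) (Icc 0 b) := by
      refine Metric.continuousOn_iff.2 fun t ht ε hε => ?_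
      obtain ⟨s₀, hs₀, H⟩ := curve_modulus hh hK hk (half_pos hε)
      refine ⟨s₀, hs₀, fun s hs hst => ?_⟩
      rw [Real.dist_eq] at hst ⊢
      linarith [H b γ hγ.1 hγK s hs t ht hst]
    refine (hc.div_const (mass (γ 0))).congr fun t ht => ?_
    simp only [FfM, hmass t ht]
  · have hx' : x ∈ Icc (0:ℝ) b := ⟨hx.1, hx.2.le⟩
    have hr0 : 0 < r := lt_of_le_of_lt hM0 hr
    obtain ⟨ε, hε, H⟩ := exists_of_rGrad_lt (a := ENNReal.ofReal r)
      (lt_of_eq_of_lt (hgrad _ (hγ.1.2.1 x hx') (hγ.2 x hx'))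
        ((ENNReal.ofReal_lt_ofReal_iff hr0).2 ((hM x hx').trans_lt hr)))
    have hmem : Ioo x (min (x + ε) b) ∈ nhdsWithin x (Ioi x) :=
      Ioo_mem_nhdsGT (lt_min (by linarith) hx.2)
    filter_upwards [hmem] with z hz
    have hz1 := hz.2.trans_le (min_le_left _ _)
    have hz2 := hz.2.trans_le (min_le_right _ _)
    have := H (b - x) (fun t => γ (x + t)) (z - x) (hγ.shift hx.1 hx.2.le) (by simp)
      (by linarith [hz.1]) (by linarith) (by linarith)
    rw [ENNReal.ofReal_lt_ofReal_iff hr0] at this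
    simpa using this

theorem one_sided [LocallyCompactSpace X] {h : ℝ → ℝ} (hh : IsGauge h) {μ : Measure X}
    [IsFiniteMeasureOnCompacts μ] {K : Set X} (hK : IsCompact K) {k g : X → ℝ}
    (hk : LocallyIntegrable k μ) (hg : LocallyIntegrable g μ) (hg0 : ∀ x, 0 ≤ g x)
    (hgrad : ∀ η ∈ MM μ, η ≠ 0 → rGrad h μ (FfM k) η = ENNReal.ofReal (FfM g η)) (c : ℝ)
    {ε : ℝ} (hε : 0 < ε) :
    ∃ s₀ > 0, ∀ (b : ℝ) (γ : ℝ → Measure X), IsCurveM h μ b γ → 0 < b → b < s₀ →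
      (∀ t ∈ Icc (0:ℝ) b, γ t Kᶜ = 0) →
        ∫ x, min (k x) c ∂(γ b) - ∫ x, min (k x) c ∂(γ 0) ≤
          b * (∫ x, indicator {x | k x < c} g x ∂(γ 0) + ε) := by
  obtain ⟨s₀, hs₀, H⟩ := curve_modulus hh hK hg hε
  refine ⟨s₀, hs₀, fun b γ hγ hb hbs hγK => ?_⟩
  set S : Set X := {x | k x < c} with hS
  have m0 : (0:ℝ) ∈ Icc (0:ℝ) b := ⟨le_rfl, hb.le⟩
  have mb : b ∈ Icc (0:ℝ) b := ⟨hb.le, le_rfl⟩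
  have hkm : AEStronglyMeasurable k (γ 0) :=
    hk.aestronglyMeasurable.mono_measure (hγ.2.1 0 m0).1
  have hSm : NullMeasurableSet S (γ 0) :=
    nullMeasurableSet_lt hkm.aemeasurable aemeasurable_const
  set θ := (γ 0).restrict S with hθ
  have hθle : θ ≤ γ 0 := Measure.restrict_le_self
  obtain ⟨γ', hγ', h0, hle, hγ'K⟩ := exists_split hh hb hγ hK hγK hθle
  have hfθ : θ ∈ MM μ := mem_MM_of_le (hγ.2.1 0 m0) hθle
  have i0 := isFinite_of_mem_MM (hγ.2.1 0 m0)
  have ib := isFinite_of_mem_MM (hγ.2.1 b mb)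
  have ib' := isFinite_of_mem_MM (hγ'.2.1 b mb)
  have iθ := isFinite_of_mem_MM hfθ
  have kint : ∀ {ν : Measure X}, ν ≤ μ → ν Kᶜ = 0 → Integrable k ν := fun h1 h2 =>
    integrable_of_le hK hk h1 h2
  have k0 := kint (hγ.2.1 0 m0).1 (hγK 0 m0)
  have kb := kint (hγ.2.1 b mb).1 (hγK b mb)
  have kb' := kint (hγ'.2.1 b mb).1 (hγ'K b mb)
  have kθ : Integrable k θ := k0.mono_measure hθle
  have fint : ∀ {ν : Measure X} [IsFiniteMeasure ν], Integrable k ν →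
      Integrable (fun x => min (k x) c) ν := fun hi => hi.inf (integrable_const c)
  have mass' : (γ' b).real univ = θ.real univ := by
    simp only [Measure.real, curve_mass hh hγ' hb.le le_rfl, h0]
  have massγ : (γ b).real univ = (γ 0).real univ := by
    simp only [Measure.real, curve_mass hh hγ hb.le le_rfl]
  have hind : ∫ x, indicator S g x ∂(γ 0) = ∫ x, g x ∂θ := integral_indicator₀ hSm
  have hgθ : 0 ≤ ∫ x, g x ∂θ := integral_nonneg hg0
  -- value at time zero
  have e0 : ∫ x, (min (k x) c - c) ∂(γ 0) = ∫ x, (k x - c) ∂θ := by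
    rw [hθ, ← integral_indicator₀ hSm]
    refine integral_congr_ae (Eventually.of_forall fun x => ?_)
    by_cases hx : x ∈ S
    · simp only [indicator_of_mem hx]
      rw [min_eq_left (le_of_lt hx)]
    · simp only [indicator_of_notMem hx]
      rw [min_eq_right (not_lt.1 hx), sub_self]
  have eb : ∫ x, (min (k x) c - c) ∂(γ b) ≤ ∫ x, (k x - c) ∂(γ' b) := by
    have a1 : ∫ x, (c - min (k x) c) ∂(γ' b) ≤ ∫ x, (c - min (k x) c) ∂(γ b) :=
      integral_mono_measure hle (Eventually.of_forall fun x => sub_nonneg.2 (min_le_right _ _))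
        ((integrable_const c).sub (fint kb))
    have a2 : ∫ x, (min (k x) c - c) ∂(γ' b) ≤ ∫ x, (k x - c) ∂(γ' b) :=
      integral_mono ((fint kb').sub (integrable_const c)) (kb'.sub (integrable_const c))
        fun x => sub_le_sub_right (min_le_left _ _) _
    rw [integral_sub (integrable_const c) (fint kb'),
      integral_sub (integrable_const c) (fint kb)] at a1
    rw [integral_sub (fint kb') (integrable_const c)] at a2
    rw [integral_sub (fint kb) (integrable_const c)]
    linarith
  have hmain : |∫ x, k x ∂(γ' b) - ∫ x, k x ∂θ| ≤ b * (∫ x, g x ∂θ + ε) := by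
    by_cases hz : θ = 0
    · have : γ' b = 0 := by
        rw [← Measure.measure_univ_eq_zero, curve_mass hh hγ' hb.le le_rfl, h0, hz]; simp
      rw [this, hz]
      simp only [integral_zero_measure, sub_self, abs_zero]
      positivity
    · have hmθ : 0 < mass θ := mass_pos hfθ hz
      have hmt : ∀ t ∈ Icc (0:ℝ) b, mass (γ' t) = mass θ := fun t ht => by
        simp only [mass, curve_mass hh hγ' ht.1 ht.2, h0]
      have hX : IsCurveX h μ b γ' := ⟨hγ', fun t ht hc => by
        have := hmt t ht
        rw [hc] at this
        simp only [mass, Measure.coe_zero, Pi.zero_apply, ENNReal.toReal_zero] at this hmθ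
        linarith⟩
      have := curve_mean_value hh hK hk hgrad hX hγ'K (M := (∫ x, g x ∂θ + ε) / mass θ)
        (by positivity) (fun t ht => by
          simp only [FfM, hmt t ht]
          gcongr
          have := H b γ' hγ' hγ'K t ht 0 m0 (by
            rw [sub_zero, abs_of_nonneg ht.1]; exact ht.2.trans_lt hbs)
          rw [h0] at this
          linarith [(abs_le.1 this).2])
      rw [h0] at this
      simp only [FfM, hmt b mb] at this
      rw [← sub_div, abs_div, abs_of_pos hmθ, div_mul_eq_mul_div, div_le_div_iff_of_pos_right hmθ]
        at this
      linarith
  rw [integral_sub (fint k0) (integrable_const c), integral_sub kθ (integrable_const c)] at e0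
  rw [integral_sub (fint kb) (integrable_const c), integral_sub kb' (integrable_const c)] at eb
  simp only [integral_const, smul_eq_mul, mass', massγ] at e0 eb
  rw [hind]
  linarith [(abs_le.1 hmain).2]

theorem locInt_ind {μ : Measure X} {k g : X → ℝ} (hk : LocallyIntegrable k μ)
    (hg : LocallyIntegrable g μ) (c : ℝ) :
    LocallyIntegrable (indicator {x | k x < c} g) μ := by
  refine hg.mono (hg.aestronglyMeasurable.indicator₀
    (nullMeasurableSet_lt hk.aestronglyMeasurable.aemeasurable aemeasurable_const))
    (Eventually.of_forall fun x => norm_indicator_le_norm_self _ _)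

theorem upper_min [LocallyCompactSpace X] {h : ℝ → ℝ} (hh : IsGauge h) {μ : Measure X}
    [IsFiniteMeasureOnCompacts μ] {k g : X → ℝ}
    (hk : LocallyIntegrable k μ) (hg : LocallyIntegrable g μ) (hg0 : ∀ x, 0 ≤ g x)
    (hgrad : ∀ η ∈ MM μ, η ≠ 0 → rGrad h μ (FfM k) η = ENNReal.ofReal (FfM g η)) (c : ℝ)
    {η : Measure X} (hη : η ∈ MM μ) (hη0 : η ≠ 0) :
    rGrad h μ (FfM (fun x => min (k x) c)) η ≤
        ENNReal.ofReal (FfM (indicator {x | k x < c} g) η) := by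
  have hm : 0 < mass η := mass_pos hη hη0
  refine ENNReal.le_of_forall_pos_le_add fun ε' hε' _ => ?_
  have hε'' : (0:ℝ) < ε' := by exact_mod_cast hε'
  set ε : ℝ := ε' * mass η / 2 with hεdef
  have hε : 0 < ε := by positivity
  obtain ⟨ρ, hρ, hK⟩ := hη.2.exists_isCompact_cthickening
  set K := Metric.cthickening ρ (msupp η) with hKdef
  obtain ⟨s₁, hs₁, H1⟩ := one_sided hh hK hk hg hg0 hgrad c hε
  obtain ⟨s₂, hs₂, H2⟩ := curve_modulus hh hK (locInt_ind hk hg c) hε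
  refine rGrad_le (lt_min hρ (lt_min hs₁ hs₂)) fun b γ s hγ h0 hs hslt hsb => ?_
  have l1 : s < ρ := hslt.trans_le (min_le_left _ _)
  have l2 : s < s₁ := hslt.trans_le ((min_le_right _ _).trans (min_le_left _ _))
  have l3 : s < s₂ := hslt.trans_le ((min_le_right _ _).trans (min_le_right _ _))
  have hγs := hγ.1.initial hs.le hsb.le
  have hnull : ∀ t ∈ Icc (0:ℝ) s, γ t Kᶜ = 0 := by
    have := support_null hh hγs l1
    rwa [h0] at this
  have a1 := H1 s γ hγs hs l2 hnull
  have a2 := H1 s _ hγs.reverse hs l2 (fun t ht => hnull _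
    ⟨by linarith [ht.2], by linarith [ht.1]⟩)
  have a3 := H2 s γ hγs hnull s ⟨hs.le, le_rfl⟩ 0 ⟨le_rfl, hs.le⟩ (by
    rwa [sub_zero, abs_of_pos hs])
  simp only [sub_self, sub_zero] at a2
  have hms : mass (γ s) = mass η := by
    simp only [mass, curve_mass hh hγs hs.le le_rfl, h0]
  rw [h0] at a1 a2 a3
  rw [← ENNReal.ofReal_coe_nnreal, ← ENNReal.ofReal_add ?_ hε''.le]
  · refine ENNReal.ofReal_le_ofReal ?_
    simp only [FfM, hms]
    rw [← sub_div, abs_div, abs_of_pos hm, div_div, div_le_iff₀ (by positivity)]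
    set W := ∫ x, indicator {x | k x < c} g x ∂η with hW
    have e : (W / mass η + ε') * (mass η * s) = s * (W + 2 * ε) := by
      rw [hεdef]; field_simp
    rw [e]
    have b1 : s * (∫ x, indicator {x | k x < c} g x ∂(γ s) + ε) ≤ s * (W + 2 * ε) := by
      refine mul_le_mul_of_nonneg_left ?_ hs.le
      linarith [(abs_le.1 a3).2]
    have b2 : s * (W + ε) ≤ s * (W + 2 * ε) := by
      gcongr
      linarith
    rw [abs_le]
    constructor <;> linarith
  · exact div_nonneg (integral_nonneg fun x => indicator_nonneg (fun y _ => hg0 y) x) hm.le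

theorem rGrad_neg {h : ℝ → ℝ} {μ : Measure X} {F : Measure X → ℝ} {η : Measure X} :
    rGrad h μ (fun ν => - F ν) η = rGrad h μ F η := by
  simp only [rGrad, rGradE, neg_sub_neg, abs_sub_comm]

theorem FfM_neg (k : X → ℝ) : FfM (fun x => - k x) = fun ν : Measure X => - FfM k ν := by
  funext ν
  simp only [FfM, integral_neg, neg_div]

theorem upper_max [LocallyCompactSpace X] {h : ℝ → ℝ} (hh : IsGauge h) {μ : Measure X}
    [IsFiniteMeasureOnCompacts μ] {k g : X → ℝ}
    (hk : LocallyIntegrable k μ) (hg : LocallyIntegrable g μ) (hg0 : ∀ x, 0 ≤ g x)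
    (hgrad : ∀ η ∈ MM μ, η ≠ 0 → rGrad h μ (FfM k) η = ENNReal.ofReal (FfM g η)) (c : ℝ)
    {η : Measure X} (hη : η ∈ MM μ) (hη0 : η ≠ 0) :
    rGrad h μ (FfM (fun x => max (k x) c)) η ≤
        ENNReal.ofReal (FfM (indicator {x | c < k x} g) η) := by
  have key := upper_min hh (k := fun x => - k x) hk.neg hg hg0 (fun η hη hη0 => by
    rw [FfM_neg, rGrad_neg, hgrad η hη hη0]) (-c) hη hη0
  simp only [min_neg_neg, neg_lt_neg_iff] at key
  rwa [FfM_neg (fun x => max (k x) c), rGrad_neg] at key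

theorem locality_main [LocallyCompactSpace X] {h : ℝ → ℝ} (hh : IsGauge h) {μ : Measure X}
    [IsFiniteMeasureOnCompacts μ] {k g : X → ℝ}
    (hk : LocallyIntegrable k μ) (hg : LocallyIntegrable g μ) (hg0 : ∀ x, 0 ≤ g x)
    (hgrad : ∀ η ∈ MM μ, η ≠ 0 → rGrad h μ (FfM k) η = ENNReal.ofReal (FfM g η)) (c : ℝ)
    {η : Measure X} (hη : η ∈ MM μ) (hη0 : η ≠ 0) :
    rGrad h μ (FfM (fun x => min (k x) c)) η =
        ENNReal.ofReal (FfM (indicator {x | k x < c} g) η) ∧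
    rGrad h μ (FfM (fun x => max (k x) c)) η =
        ENNReal.ofReal (FfM (indicator {x | c < k x} g) η) := by
  have u1 := upper_min hh hk hg hg0 hgrad c hη hη0
  have u2 := upper_max hh hk hg hg0 hgrad c hη hη0
  have int : ∀ {w : X → ℝ}, LocallyIntegrable w μ → ∀ η ∈ MM μ, Integrable w η := fun hw η hη =>
    integrable_of_le hη.2 hw hη.1 (measure_msupp_compl η)
  have sub : rGrad h μ (FfM k) η ≤ rGrad h μ (FfM (fun x => min (k x) c)) η +
      rGrad h μ (FfM (fun x => max (k x) c)) η := by
    refine rGrad_add (c := c) fun ν hν hν0 => ?_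
    have hm := mass_pos hν hν0
    have hf := isFinite_of_mem_MM hν
    have ik := int hk ν hν
    have : ∫ x, min (k x) c ∂ν + ∫ x, max (k x) c ∂ν = ∫ x, k x ∂ν + mass ν * c := by
      have i1 : Integrable (fun x => min (k x) c) ν := ik.inf (integrable_const c)
      have i2 : Integrable (fun x => max (k x) c) ν := ik.sup (integrable_const c)
      rw [← integral_add i1 i2]
      simp only [min_add_max]
      rw [integral_add ik (integrable_const c), integral_const]
      rfl
    simp only [FfM]
    field_simp
    linarith
  rw [hgrad η hη hη0] at sub
  have hm := mass_pos hη hη0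
  have i1 : Integrable (indicator {x | k x < c} g) η := int (locInt_ind hk hg c) η hη
  have i2 : Integrable (indicator {x | c < k x} g) η := by
    have := int (locInt_ind hk.neg hg (-c)) η hη
    simpa only [Pi.neg_apply, neg_lt_neg_iff] using this
  have n1 : 0 ≤ FfM (indicator {x | k x < c} g) η :=
    div_nonneg (integral_nonneg fun x => indicator_nonneg (fun y _ => hg0 y) x) hm.le
  have n2 : 0 ≤ FfM (indicator {x | c < k x} g) η :=
    div_nonneg (integral_nonneg fun x => indicator_nonneg (fun y _ => hg0 y) x) hm.le
  have hsum : FfM (indicator {x | k x < c} g) η + FfM (indicator {x | c < k x} g) η ≤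
      FfM g η := by
    simp only [FfM]
    rw [← add_div, ← integral_add i1 i2]
    refine div_le_div_of_nonneg_right ?_ hm.le
    refine integral_mono (i1.add i2) (int hg η hη) fun x => ?_
    simp only [Pi.add_apply, indicator_apply, mem_ofPred_eq]
    have := hg0 x
    split_ifs <;> linarith
  have hs := (ENNReal.ofReal_le_ofReal hsum).trans sub
  rw [ENNReal.ofReal_add n1 n2] at hs
  refine ⟨le_antisymm u1 ?_, le_antisymm u2 ?_⟩
  · exact (ENNReal.add_le_add_iff_right ENNReal.ofReal_ne_top).1
      (hs.trans (add_le_add_right u2 _))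
  · exact (ENNReal.add_le_add_iff_left ENNReal.ofReal_ne_top).1
      (hs.trans (add_le_add_left u1 _))

end Aux



/-- Locality of upper gradients: if `g` represents the upper gradient
of `k` (i.e. `r_{F_k} = F_g` on `𝓧`), then `g·χ_{k<c}` represents the upper gradient of
`k ∧ c` and `g·χ_{k>c}` represents the upper gradient of `k ∨ c`. -/
theorem stmt18 {X : Type*} [MetricSpace X] [MeasurableSpace X] [BorelSpace X]
    [LocallyCompactSpace X] [TopologicalSpace.SeparableSpace X]
    (μ : Measure X) [μ.Regular]
    (hμ : ∀ (x : X) (r : ℝ), 0 < r → 0 < μ (Metric.ball x r) ∧ μ (Metric.ball x r) < ⊤)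
    (h : ℝ → ℝ) (hh : IsGauge h)
    (k g : X → ℝ) (hk : LocallyIntegrable k μ) (hg : LocallyIntegrable g μ)
    (hg0 : ∀ x, 0 ≤ g x)
    (hgrad : ∀ η ∈ MM μ, η ≠ 0 → rGrad h μ (FfM k) η = ENNReal.ofReal (FfM g η))
    (c : ℝ) :
    (∀ η ∈ MM μ, η ≠ 0 →
      rGrad h μ (FfM (fun x => min (k x) c)) η =
        ENNReal.ofReal (FfM (Set.indicator {x | k x < c} g) η)) ∧
    (∀ η ∈ MM μ, η ≠ 0 →
      rGrad h μ (FfM (fun x => max (k x) c)) η =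
        ENNReal.ofReal (FfM (Set.indicator {x | c < k x} g) η)) := by
  haveI : SecondCountableTopology X := UniformSpace.secondCountable_of_separable X
  exact ⟨fun η hη h0 => (locality_main hh hk hg hg0 hgrad c hη h0).1,
    fun η hη h0 => (locality_main hh hk hg hg0 hgrad c hη h0).2⟩
end
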